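/- arXiv:2601.10864 — 6 statements merged into one kernel-verified Lean document; each statement's English description precedes it below -/
import Mathlib

section
/- Let x_1, …, x_d ∈ ℝ^n, let μ̂ = (1/d)∑_{i=1}^d x_i and Σ̂ = (1/d)∑_{i=1}^d (x_i − μ̂)(x_i − μ̂)ᵀ. If Σ̂ is invertible (equivalently, positive definite), then the pair (μ̂, Σ̂) maximizes the likelihood function (μ, Σ) ↦ ∏_{i=1}^d f_{μ,Σ}(x_i) over all μ ∈ ℝ^n and all real symmetric positive definite n×n matrices Σ. -/
open Matrix

noncomputable section

/-- The density of the `n`-variate Gaussian distribution with mean `μ` and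
covariance matrix `S`. -/
def gaussDensity {n : ℕ} (μ : Fin n → ℝ) (S : Matrix (Fin n) (Fin n) ℝ) (x : Fin n → ℝ) : ℝ :=
  Real.exp (-(1 / 2) * ((x - μ) ⬝ᵥ (S⁻¹).mulVec (x - μ))) /
    Real.sqrt ((2 * Real.pi) ^ n * S.det)


theorem det_le_exp_aux {n : ℕ} (M : Matrix (Fin n) (Fin n) ℝ) (hM : M.PosDef) :
    M.det ≤ Real.exp (M.trace - n) := by
  have h1 := hM.isHermitian.det_eq_prod_eigenvalues
  have h2 := hM.isHermitian.trace_eq_sum_eigenvalues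
  simp only [RCLike.ofReal_real_eq_id, id] at h1 h2
  rw [h1, h2]
  have : (∑ i, hM.isHermitian.eigenvalues i) - (n : ℝ)
      = ∑ i, (hM.isHermitian.eigenvalues i - 1) := by
    simp [Finset.sum_sub_distrib]
  rw [this, Real.exp_sum]
  apply Finset.prod_le_prod
  · intro i _
    exact (hM.eigenvalues_pos i).le
  · intro i _
    have := Real.add_one_le_exp (hM.isHermitian.eigenvalues i - 1)
    linarith

theorem det_mul_le_aux {n : ℕ} (A B : Matrix (Fin n) (Fin n) ℝ) (hA : A.PosDef) (hB : B.PosDef) :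
    A.det * B.det ≤ Real.exp ((A * B).trace - n) := by
  obtain ⟨C, hC, rfl⟩ : ∃ C : Matrix (Fin n) (Fin n) ℝ, IsUnit C ∧ B = Cᴴ * C := by
    open scoped MatrixOrder in
    obtain ⟨C, hC⟩ := CStarAlgebra.nonneg_iff_eq_star_mul_self.mp hB.posSemidef.nonneg
    rw [star_eq_conjTranspose] at hC
    refine ⟨C, ?_, hC⟩
    have := hB.det_pos
    rw [hC, det_mul] at this
    rw [isUnit_iff_isUnit_det, isUnit_iff_ne_zero]
    intro h
    simp [h] at this
  have hM : (C * A * Cᴴ).PosDef := by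
    have := hA.mul_mul_conjTranspose_same (B := C) (Matrix.vecMul_injective_of_isUnit hC)
    exact this
  have := det_le_exp_aux _ hM
  rw [det_mul, det_mul, Matrix.mul_assoc C, trace_mul_comm C, Matrix.mul_assoc A] at this
  rw [det_mul]
  linarith

theorem quad_sum_aux {n d : ℕ} (hd : 0 < d) (x : Fin d → Fin n → ℝ)
    (m : Fin n → ℝ) (hmu : m = (d : ℝ)⁻¹ • ∑ i, x i)
    (B : Matrix (Fin n) (Fin n) ℝ)
    (hSig : B = (d : ℝ)⁻¹ • ∑ i, vecMulVec (x i - m) (x i - m))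
    (A : Matrix (Fin n) (Fin n) ℝ) (μ : Fin n → ℝ) :
    ∑ i, (x i - μ) ⬝ᵥ A.mulVec (x i - μ)
      = d * ((A * B).trace + (m - μ) ⬝ᵥ A.mulVec (m - μ)) := by
  have hd0 : (d : ℝ) ≠ 0 := by positivity
  have hz : ∑ i, (x i - m) = 0 := by
    rw [Finset.sum_sub_distrib, hmu]
    simp only [Finset.sum_const, Finset.card_univ, Fintype.card_fin]
    rw [← Nat.cast_smul_eq_nsmul ℝ, smul_smul, mul_inv_cancel₀ hd0, one_smul, sub_self]
  have ht : (d : ℝ) * (A * B).trace = ∑ i, (x i - m) ⬝ᵥ A.mulVec (x i - m) := by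
    rw [hSig, Matrix.mul_smul, trace_smul, smul_eq_mul, mul_inv_cancel_left₀ hd0,
      Matrix.mul_sum, trace_sum]
    refine Finset.sum_congr rfl fun i _ => ?_
    rw [Matrix.mul_vecMulVec, trace_vecMulVec, dotProduct_comm]
  have he : ∀ i, (x i - μ) ⬝ᵥ A.mulVec (x i - μ) = (x i - m) ⬝ᵥ A.mulVec (x i - m)
      + (x i - m) ⬝ᵥ A.mulVec (m - μ) + (m - μ) ⬝ᵥ A.mulVec (x i - m)
      + (m - μ) ⬝ᵥ A.mulVec (m - μ) := by
    intro i
    have : x i - μ = (x i - m) + (m - μ) := by abel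
    rw [this, mulVec_add, dotProduct_add, add_dotProduct, add_dotProduct]
    ring
  simp_rw [he]
  rw [Finset.sum_add_distrib, Finset.sum_add_distrib, Finset.sum_add_distrib, ← sum_dotProduct,
    ← dotProduct_sum, ← Matrix.mulVec_sum, hz, ← ht]
  simp
  ring

theorem prod_gauss_aux {n d : ℕ} (x : Fin d → Fin n → ℝ) (μ : Fin n → ℝ)
    (S : Matrix (Fin n) (Fin n) ℝ) (T : ℝ)
    (hT : ∑ i, (x i - μ) ⬝ᵥ (S⁻¹).mulVec (x i - μ) = d * T) :
    ∏ i, gaussDensity μ S (x i)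
      = (Real.exp (-(1 / 2) * T) / Real.sqrt ((2 * Real.pi) ^ n * S.det)) ^ d := by
  unfold gaussDensity
  rw [Finset.prod_div_distrib, ← Real.exp_sum, ← Finset.mul_sum, hT, div_pow, ← Real.exp_nat_mul]
  simp
  congr 2
  ring

/-- If the sample covariance matrix `Σ̂` is invertible (equivalently, positive definite),
then the pair `(μ̂, Σ̂)` of sample mean and sample covariance maximizes the Gaussian
likelihood over all means `μ` and positive definite covariance matrices `Σ`. -/
theorem sample_mean_cov_maximize_likelihood (n d : ℕ) (hd : 0 < d)
    (x : Fin d → Fin n → ℝ)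
    (muHat : Fin n → ℝ) (hmu : muHat = (d : ℝ)⁻¹ • ∑ i, x i)
    (SigHat : Matrix (Fin n) (Fin n) ℝ)
    (hSig : SigHat = (d : ℝ)⁻¹ • ∑ i, vecMulVec (x i - muHat) (x i - muHat))
    (hinv : IsUnit SigHat.det) :
    SigHat.PosDef ∧
      ∀ (μ : Fin n → ℝ) (S : Matrix (Fin n) (Fin n) ℝ), S.PosDef →
        ∏ i, gaussDensity μ S (x i) ≤ ∏ i, gaussDensity muHat SigHat (x i) := by
  have hps : SigHat.PosSemidef := by
    rw [hSig]
    refine PosSemidef.smul (posSemidef_sum _ fun i _ => ?_) (by positivity)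
    simpa using posSemidef_vecMulVec_self_star (x i - muHat)
  have hpd : SigHat.PosDef :=
    hps.posDef_iff_isUnit.mpr ((isUnit_iff_isUnit_det _).mpr hinv)
  refine ⟨hpd, fun μ S hS => ?_⟩
  rw [prod_gauss_aux x μ S _ (quad_sum_aux hd x muHat hmu SigHat hSig _ μ),
    prod_gauss_aux x muHat SigHat _ (quad_sum_aux hd x muHat hmu SigHat hSig _ muHat)]
  refine pow_le_pow_left₀ (by positivity) ?_ d
  have hq : 0 ≤ (muHat - μ) ⬝ᵥ (S⁻¹).mulVec (muHat - μ) := by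
    simpa using hS.inv.posSemidef.dotProduct_mulVec_nonneg (muHat - μ)
  have hk := det_mul_le_aux _ _ hS.inv hpd
  rw [nonsing_inv_mul _ hinv, trace_one, Fintype.card_fin, sub_self]
  simp only [mulVec_zero, dotProduct_zero, add_zero]
  have hSd := hS.det_pos
  have hBd := hpd.det_pos
  set q := (muHat - μ) ⬝ᵥ (S⁻¹).mulVec (muHat - μ)
  set T := (S⁻¹ * SigHat).trace
  have hK : 0 < (2 * Real.pi) ^ n := by positivity
  have hk2 : SigHat.det ≤ S.det * Real.exp (T - n) := by
    rw [det_nonsing_inv, Ring.inverse_eq_inv', inv_mul_le_iff₀ hSd] at hk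
    exact hk
  rw [div_le_div_iff₀ (by positivity) (by positivity)]
  have h3 : Real.sqrt ((2 * Real.pi) ^ n * SigHat.det)
      ≤ Real.exp ((T - n) / 2) * Real.sqrt ((2 * Real.pi) ^ n * S.det) := by
    apply Real.sqrt_le_iff.mpr
    refine ⟨by positivity, ?_⟩
    rw [mul_pow (Real.exp _), Real.sq_sqrt (by positivity), ← Real.exp_nat_mul]
    have : ((2 : ℕ) : ℝ) * ((T - n) / 2) = T - n := by push_cast; ring
    rw [this]
    have := mul_le_mul_of_nonneg_left hk2 hK.le
    linarith
  calc _ ≤ Real.exp (-(1 / 2) * T) *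
        (Real.exp ((T - n) / 2) * Real.sqrt ((2 * Real.pi) ^ n * S.det)) := by
        gcongr ?_ * ?_
        exact Real.exp_le_exp.mpr (by linarith)
    _ = _ := by
        rw [← mul_assoc, ← Real.exp_add]
        congr 2
        ring
end
end

section
/- Let x_1, …, x_d ∈ ℝ^n, let μ̂ = (1/d)∑_{i=1}^d x_i and Σ̂ = (1/d)∑_{i=1}^d (x_i − μ̂)(x_i − μ̂)ᵀ. Then the likelihood function (μ, Σ) ↦ ∏_{i=1}^d f_{μ,Σ}(x_i) attains a maximum over all μ ∈ ℝ^n and all real symmetric positive definite n×n matrices Σ if and only if Σ̂ is invertible. -/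
open Matrix

noncomputable section

open scoped MatrixOrder in
lemma aux_det_le {n : ℕ} (K T : Matrix (Fin n) (Fin n) ℝ) (hK : K.PosSemidef)
    (hT : T.PosSemidef) : K.det * T.det ≤ Real.exp ((K * T).trace - n) := by
  obtain ⟨B, hB⟩ := CStarAlgebra.nonneg_iff_eq_star_mul_self.mp hT.nonneg
  rw [star_eq_conjTranspose] at hB
  have hM : (B * K * Bᴴ).PosSemidef := hK.mul_mul_conjTranspose_same B
  have h1 : K.det * T.det = (B * K * Bᴴ).det := by
    rw [hB]; simp only [det_mul]; ring
  have h2 : (K * T).trace = (B * K * Bᴴ).trace := by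
    rw [hB, ← Matrix.mul_assoc, Matrix.trace_mul_comm, ← Matrix.mul_assoc]
  rw [h1, h2, hM.1.det_eq_prod_eigenvalues, hM.1.trace_eq_sum_eigenvalues]
  have h3 : (∑ i, ((hM.1.eigenvalues i : ℝ) : ℝ)) - n = ∑ i, (hM.1.eigenvalues i - 1) := by
    simp
  simp only [RCLike.ofReal_real_eq_id, id_eq]
  rw [h3, Real.exp_sum]
  apply Finset.prod_le_prod
  · intro i _; exact hM.eigenvalues_nonneg i
  · intro i _
    have := Real.add_one_le_exp (hM.1.eigenvalues i - 1)
    linarith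

lemma aux_quad {n d : ℕ} (hd : 0 < d) (x : Fin d → Fin n → ℝ)
    (muHat : Fin n → ℝ) (hmu : muHat = (d : ℝ)⁻¹ • ∑ i, x i)
    (SigHat : Matrix (Fin n) (Fin n) ℝ)
    (hSig : SigHat = (d : ℝ)⁻¹ • ∑ i, vecMulVec (x i - muHat) (x i - muHat))
    (μ : Fin n → ℝ) (K : Matrix (Fin n) (Fin n) ℝ) :
    ∑ i, ((x i - μ) ⬝ᵥ K *ᵥ (x i - μ)) =
      d * ((K * SigHat).trace + (muHat - μ) ⬝ᵥ K *ᵥ (muHat - μ)) := by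
  have hd' : (d : ℝ) ≠ 0 := by positivity
  have h0 : ∑ i, (x i - muHat) = 0 := by
    rw [Finset.sum_sub_distrib, hmu]
    simp only [Finset.sum_const, Finset.card_univ, Fintype.card_fin]
    rw [← Nat.cast_smul_eq_nsmul ℝ, smul_smul, mul_inv_cancel₀ hd', one_smul, sub_self]
  have h1 : (d : ℝ) * (K * SigHat).trace =
      ∑ i, ((x i - muHat) ⬝ᵥ K *ᵥ (x i - muHat)) := by
    rw [hSig, Matrix.mul_smul, trace_smul, smul_eq_mul, mul_inv_cancel_left₀ hd',
      Matrix.mul_sum, trace_sum]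
    refine Finset.sum_congr rfl fun i _ => ?_
    rw [mul_vecMulVec, trace_vecMulVec, dotProduct_comm]
  have h2 : ∀ i, (x i - μ) ⬝ᵥ K *ᵥ (x i - μ) =
      (x i - muHat) ⬝ᵥ K *ᵥ (x i - muHat) + (x i - muHat) ⬝ᵥ K *ᵥ (muHat - μ)
      + (muHat - μ) ⬝ᵥ K *ᵥ (x i - muHat) + (muHat - μ) ⬝ᵥ K *ᵥ (muHat - μ) := by
    intro i
    have : x i - μ = (x i - muHat) + (muHat - μ) := by abel
    rw [this, mulVec_add, add_dotProduct, dotProduct_add, dotProduct_add]; ring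
  rw [mul_add, h1]
  simp only [h2, Finset.sum_add_distrib]
  rw [← sum_dotProduct, ← dotProduct_sum, ← mulVec_sum, h0]
  simp [mul_sub]

lemma aux_prod {n d : ℕ} (hd : 0 < d) (x : Fin d → Fin n → ℝ)
    (muHat : Fin n → ℝ) (hmu : muHat = (d : ℝ)⁻¹ • ∑ i, x i)
    (SigHat : Matrix (Fin n) (Fin n) ℝ)
    (hSig : SigHat = (d : ℝ)⁻¹ • ∑ i, vecMulVec (x i - muHat) (x i - muHat))
    (μ : Fin n → ℝ) (S : Matrix (Fin n) (Fin n) ℝ) :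
    ∏ i, gaussDensity μ S (x i) =
      (Real.exp (-(1 / 2) * ((S⁻¹ * SigHat).trace + (muHat - μ) ⬝ᵥ S⁻¹ *ᵥ (muHat - μ))) /
        Real.sqrt ((2 * Real.pi) ^ n * S.det)) ^ d := by
  unfold gaussDensity
  rw [Finset.prod_div_distrib, ← Real.exp_sum, ← Finset.mul_sum,
    aux_quad hd x muHat hmu SigHat hSig, div_pow, ← Real.exp_nat_mul]
  simp only [Finset.prod_const, Finset.card_univ, Fintype.card_fin]
  congr 2
  ring

lemma aux_psd {n d : ℕ} (x : Fin d → Fin n → ℝ)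
    (muHat : Fin n → ℝ)
    (SigHat : Matrix (Fin n) (Fin n) ℝ)
    (hSig : SigHat = (d : ℝ)⁻¹ • ∑ i, vecMulVec (x i - muHat) (x i - muHat)) :
    SigHat.PosSemidef := by
  rw [hSig]
  refine PosSemidef.smul (posSemidef_sum _ fun i _ => ?_) (by positivity)
  simpa using posSemidef_vecMulVec_self_star (x i - muHat)

lemma aux_quad_nonneg {n : ℕ} {S : Matrix (Fin n) (Fin n) ℝ} (hS : S.PosDef) (v : Fin n → ℝ) :
    0 ≤ v ⬝ᵥ S⁻¹ *ᵥ v := by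
  simpa using hS.inv.posSemidef.dotProduct_mulVec_nonneg v

lemma aux_exp_div_sqrt {a c D : ℝ} (hD : 0 < c * D) :
    Real.exp (-(1 / 2) * a) / Real.sqrt (c * D) = Real.sqrt (Real.exp (-a) / (c * D)) := by
  rw [Real.sqrt_div (Real.exp_pos _).le]
  congr 1
  rw [← Real.exp_half]
  congr 1
  ring

/-- The Gaussian likelihood function attains a maximum over all means `μ` and positive
definite covariance matrices `Σ` if and only if the sample covariance matrix `Σ̂`
is invertible. -/
theorem likelihood_attains_max_iff_sample_cov_invertible (n d : ℕ) (hd : 0 < d)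
    (x : Fin d → Fin n → ℝ)
    (muHat : Fin n → ℝ) (hmu : muHat = (d : ℝ)⁻¹ • ∑ i, x i)
    (SigHat : Matrix (Fin n) (Fin n) ℝ)
    (hSig : SigHat = (d : ℝ)⁻¹ • ∑ i, vecMulVec (x i - muHat) (x i - muHat)) :
    (∃ (μ : Fin n → ℝ) (S : Matrix (Fin n) (Fin n) ℝ), S.PosDef ∧
        ∀ (μ' : Fin n → ℝ) (S' : Matrix (Fin n) (Fin n) ℝ), S'.PosDef →
          ∏ i, gaussDensity μ' S' (x i) ≤ ∏ i, gaussDensity μ S (x i)) ↔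
      IsUnit SigHat.det := by
  have hpsd := aux_psd x muHat SigHat hSig
  have hc : (0 : ℝ) < (2 * Real.pi) ^ n := by positivity
  simp only [aux_prod hd x muHat hmu SigHat hSig]
  constructor
  · rintro ⟨μ, S, hS, hmax⟩
    by_contra hdet
    rw [isUnit_iff_ne_zero, not_not] at hdet
    obtain ⟨v, hv, hv0⟩ := Matrix.exists_mulVec_eq_zero_iff.mpr hdet
    have hK := hS.inv
    have hvv : (vecMulVec v v).PosSemidef := by
      simpa using posSemidef_vecMulVec_self_star v
    have hK' : (S⁻¹ + vecMulVec v v).PosDef := hK.add_posSemidef hvv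
    have hS' := hK'.inv
    have hinv : (S⁻¹ + vecMulVec v v)⁻¹⁻¹ = S⁻¹ + vecMulVec v v :=
      nonsing_inv_nonsing_inv _ hK'.det_pos.ne'.isUnit
    have hSinv : S⁻¹⁻¹ = S := nonsing_inv_nonsing_inv _ hS.det_pos.ne'.isUnit
    have htr : ((S⁻¹ + vecMulVec v v) * SigHat).trace = (S⁻¹ * SigHat).trace := by
      have hsym : SigHatᵀ = SigHat := by simpa using hpsd.1.eq
      have : v ᵥ* SigHat = 0 := by rw [← hsym, vecMul_transpose, hv0]
      rw [Matrix.add_mul, vecMulVec_mul, this]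
      simp
    have hpos : 0 < v ⬝ᵥ S *ᵥ v := by simpa using hS.dotProduct_mulVec_pos hv
    have hdetlt : (S⁻¹).det < (S⁻¹ + vecMulVec v v).det := by
      have h1 : (S⁻¹ + vecMulVec v v).det = (S⁻¹).det * (1 + v ⬝ᵥ S *ᵥ v) := by
        rw [vecMulVec_eq Unit, det_add_replicateCol_mul_replicateRow hK.det_pos.ne'.isUnit, hSinv]
        congr 1
        rw [det_unique]
        simp [Matrix.mul_apply, dotProduct, mulVec, Finset.mul_sum, Finset.sum_mul]
        rw [Finset.sum_comm]
        simp [mul_assoc]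
      rw [h1]
      nlinarith [hK.det_pos]
    have h := hmax muHat _ hS'
    apply absurd h
    rw [not_le, hinv, htr]
    have e1 : (S⁻¹).det = S.det⁻¹ := by rw [det_nonsing_inv, Ring.inverse_eq_inv']
    have e2 : ((S⁻¹ + vecMulVec v v)⁻¹).det = (S⁻¹ + vecMulVec v v).det⁻¹ := by
      rw [det_nonsing_inv, Ring.inverse_eq_inv']
    have hlt : ((S⁻¹ + vecMulVec v v)⁻¹).det < S.det := by
      rw [e2, ← inv_inv S.det, ← e1]
      exact inv_strictAnti₀ hK.det_pos hdetlt
    have hq := aux_quad_nonneg hS (muHat - μ)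
    refine pow_lt_pow_left₀ ?_ (by positivity) hd.ne'
    refine div_lt_div₀' ?_ ?_ (Real.exp_pos _) ?_
    · simp only [sub_self, zero_dotProduct, add_zero]
      apply Real.exp_le_exp.mpr
      linarith
    · exact Real.sqrt_lt_sqrt (mul_pos hc hS'.det_pos).le (mul_lt_mul_of_pos_left hlt hc)
    · exact Real.sqrt_pos.mpr (mul_pos hc hS'.det_pos)
  · intro hdet
    have hpd : SigHat.PosDef := hpsd.posDef_iff_det_ne_zero.mpr hdet.ne_zero
    refine ⟨muHat, SigHat, hpd, fun μ' S' hS' => ?_⟩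
    refine pow_le_pow_left₀ (by positivity) ?_ d
    rw [nonsing_inv_mul _ hdet, aux_exp_div_sqrt (mul_pos hc hS'.det_pos),
      aux_exp_div_sqrt (mul_pos hc hpd.det_pos)]
    apply Real.sqrt_le_sqrt
    simp only [sub_self, zero_dotProduct, add_zero, trace_one, Fintype.card_fin]
    have hq := aux_quad_nonneg hS' (muHat - μ')
    have key := aux_det_le S'⁻¹ SigHat hS'.inv.posSemidef hpsd
    rw [det_nonsing_inv, Ring.inverse_eq_inv', inv_mul_le_iff₀ hS'.det_pos] at key
    rw [div_le_div_iff₀ (mul_pos hc hS'.det_pos) (mul_pos hc hpd.det_pos)]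
    have h1 : Real.exp (-((S'⁻¹ * SigHat).trace + (muHat - μ') ⬝ᵥ S'⁻¹ *ᵥ (muHat - μ'))) ≤
        Real.exp (-(S'⁻¹ * SigHat).trace) := Real.exp_le_exp.mpr (by linarith)
    have h2 : Real.exp (-(S'⁻¹ * SigHat).trace) * SigHat.det ≤ Real.exp (-n) * S'.det := by
      calc _ ≤ Real.exp (-(S'⁻¹ * SigHat).trace) *
            (S'.det * Real.exp ((S'⁻¹ * SigHat).trace - n)) := by gcongr
        _ = Real.exp (-(S'⁻¹ * SigHat).trace) * Real.exp ((S'⁻¹ * SigHat).trace - n)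
            * S'.det := by ring
        _ = _ := by rw [← Real.exp_add]; congr 2; ring
    calc _ ≤ Real.exp (-(S'⁻¹ * SigHat).trace) * ((2 * Real.pi) ^ n * SigHat.det) :=
          mul_le_mul_of_nonneg_right h1 (mul_pos hc hpd.det_pos).le
      _ = (2 * Real.pi) ^ n * (Real.exp (-(S'⁻¹ * SigHat).trace) * SigHat.det) := by ring
      _ ≤ (2 * Real.pi) ^ n * (Real.exp (-n) * S'.det) := mul_le_mul_of_nonneg_left h2 hc.le
      _ = _ := by ring
end
end

section
/- (Dempster) Let G be a simple graph on vertex set {1,…,n}. Then MLT(G) equals the minimum positive integer d such that for Lebesgue-almost every real n×d matrix X, setting S = X Xᵀ, there exists a real symmetric positive definite n×n matrix T with T_{ii} = S_{ii} for all i ∈ {1,…,n} and T_{ij} = S_{ij} for all edges ij ∈ E(G). -/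
open MeasureTheory Matrix

noncomputable section

/-- The objective function `K ↦ tr(S K) − log det K` of Gaussian maximum likelihood,
where `S` is the sample covariance matrix. -/
def mlObjective {n : ℕ} (S K : Matrix (Fin n) (Fin n) ℝ) : ℝ :=
  (S * K).trace - Real.log K.det

/-- The maximum likelihood threshold of a set `M` of positive definite matrices:
the smallest positive integer `d` such that for Lebesgue-almost every real `n × d`
matrix `X`, the function `K ↦ tr(X Xᵀ K) − log det K` attains a minimum on `M`. -/
def mlt (n : ℕ) (M : Set (Matrix (Fin n) (Fin n) ℝ)) : ℕ :=
  sInf {d : ℕ | 0 < d ∧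
    ∀ᵐ X : Fin n → Fin d → ℝ ∂volume,
      ∃ K ∈ M, ∀ K' ∈ M,
        mlObjective (Matrix.of X * (Matrix.of X)ᵀ) K ≤
          mlObjective (Matrix.of X * (Matrix.of X)ᵀ) K'}

/-- The Gaussian graphical model of a graph `G` on `{1,…,n}`: all symmetric positive
definite matrices whose off-diagonal entries vanish at non-edges of `G`. -/
def graphModel (n : ℕ) (G : SimpleGraph (Fin n)) : Set (Matrix (Fin n) (Fin n) ℝ) :=
  {K | K.PosDef ∧ ∀ i j, i ≠ j → ¬ G.Adj i j → K i j = 0}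

open Filter Topology

lemma aux_open {n : ℕ} {K E : Matrix (Fin n) (Fin n) ℝ} (hK : K.PosDef) (hE : E.IsHermitian) :
    ∀ᶠ t in 𝓝 (0:ℝ), (K + t • E).PosDef := by
  have h : ∀ᶠ t in 𝓝 (0:ℝ), ∀ x ∈ Metric.sphere (0 : Fin n → ℝ) 1,
      0 < x ⬝ᵥ ((K + t • E) *ᵥ x) := by
    apply (isCompact_sphere (0 : Fin n → ℝ) 1).eventually_forall_of_forall_eventually
    intro x hx
    have hc : Continuous (fun p : ℝ × (Fin n → ℝ) => p.2 ⬝ᵥ ((K + p.1 • E) *ᵥ p.2)) := by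
      fun_prop
    apply hc.continuousAt.eventually (lt_mem_nhds _)
    have hx0 : x ≠ 0 := by
      rintro rfl
      simp at hx
    simpa using hK.dotProduct_mulVec_pos hx0
  filter_upwards [h] with t ht
  refine Matrix.PosDef.of_dotProduct_mulVec_pos ?_ ?_
  · exact hK.1.add (by simpa [Matrix.IsHermitian, Matrix.conjTranspose_smul] using congrArg (t • ·) hE)
  · intro y hy
    have hn : 0 < ‖y‖ := norm_pos_iff.2 hy
    have := ht (‖y‖⁻¹ • y) (by simp [norm_smul, hn.ne'])
    simp only [Matrix.mulVec_smul, dotProduct_smul, smul_dotProduct, smul_eq_mul] at this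
    have h2 : 0 < ‖y‖⁻¹ := inv_pos.2 hn
    have h3 := (mul_pos_iff_of_pos_left h2).1 this
    exact (mul_pos_iff_of_pos_left h2).1 h3

lemma aux_trace {n : ℕ} {A K : Matrix (Fin n) (Fin n) ℝ} (hA : A.PosSemidef) (hK : K.PosSemidef) :
    0 ≤ (A * K).trace := by
  obtain ⟨B, rfl⟩ : ∃ B : Matrix (Fin n) (Fin n) ℝ, K = Bᴴ * B := by
    open scoped MatrixOrder in
    exact CStarAlgebra.nonneg_iff_eq_star_mul_self.1 (Matrix.nonneg_iff_posSemidef.2 hK)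
  have := (hA.mul_mul_conjTranspose_same B).trace_nonneg
  rwa [Matrix.trace_mul_cycle, Matrix.trace_mul_comm] at this

lemma aux_entry {n : ℕ} {K : Matrix (Fin n) (Fin n) ℝ} (hK : K.PosSemidef) (i j : Fin n) :
    |K i j| ≤ K.trace := by
  have hd : ∀ k, K k k ≤ K.trace := fun k =>
    Finset.single_le_sum (f := fun k => K k k) (fun l _ => hK.diag_nonneg) (Finset.mem_univ k)
  have hs : K j i = K i j := by simpa using hK.1.apply i j
  have h1 := hK.dotProduct_mulVec_nonneg (Pi.single i 1 + Pi.single j 1)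
  have h2 := hK.dotProduct_mulVec_nonneg (Pi.single i 1 - Pi.single j 1)
  simp [Matrix.mulVec_add, Matrix.mulVec_sub, sub_dotProduct, add_dotProduct, hs] at h1 h2
  have := hd i
  have := hd j
  rw [abs_le]
  constructor <;> linarith

lemma aux_logdet {n : ℕ} {K : Matrix (Fin n) (Fin n) ℝ} (hK : K.PosDef) {e : ℝ} (he : 0 < e) :
    Real.log K.det ≤ e * K.trace - n * (1 + Real.log e) := by
  rw [hK.1.det_eq_prod_eigenvalues, hK.1.trace_eq_sum_eigenvalues]
  simp only [RCLike.ofReal_real_eq_id, id]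
  rw [Real.log_prod (fun i _ => (hK.eigenvalues_pos i).ne'), Finset.mul_sum]
  have : (n:ℝ) * (1 + Real.log e) = ∑ i : Fin n, (1 + Real.log e) := by simp [mul_add]
  rw [this, ← Finset.sum_sub_distrib]
  refine Finset.sum_le_sum fun i _ => ?_
  have hp := hK.eigenvalues_pos i
  have := Real.log_le_sub_one_of_pos (mul_pos he hp)
  rw [Real.log_mul he.ne' hp.ne'] at this
  linarith

lemma aux_closed (n : ℕ) : IsClosed {K : Matrix (Fin n) (Fin n) ℝ | K.PosSemidef} := by
  have : {K : Matrix (Fin n) (Fin n) ℝ | K.PosSemidef} =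
      {K | Kᴴ = K} ∩ ⋂ x : Fin n → ℝ, {K | 0 ≤ x ⬝ᵥ (K *ᵥ x)} := by
    ext K
    simp [Matrix.posSemidef_iff_dotProduct_mulVec, Matrix.IsHermitian]
  rw [this]
  refine (isClosed_eq (by fun_prop) continuous_id).inter (isClosed_iInter fun x => ?_)
  exact isClosed_le continuous_const (by fun_prop)

lemma aux_min {n : ℕ} (G : SimpleGraph (Fin n)) {T : Matrix (Fin n) (Fin n) ℝ} (hT : T.PosDef) :
    ∃ K ∈ graphModel n G, ∀ K' ∈ graphModel n G, mlObjective T K ≤ mlObjective T K' := by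
  obtain ⟨c, hc, hcT⟩ : ∃ c : ℝ, 0 < c ∧ (T - c • (1 : Matrix (Fin n) (Fin n) ℝ)).PosSemidef := by
    have h := aux_open hT (E := -1) (by simp [Matrix.IsHermitian])
    obtain ⟨c, h1, h2⟩ := ((h.filter_mono nhdsWithin_le_nhds).and
      (self_mem_nhdsWithin (s := Set.Ioi (0:ℝ)))).exists
    exact ⟨c, h2, by simpa [sub_eq_add_neg] using h1.posSemidef⟩
  have htr : ∀ K : Matrix (Fin n) (Fin n) ℝ, K.PosSemidef → c * K.trace ≤ (T * K).trace := by
    intro K hK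
    have := aux_trace hcT hK
    simp [Matrix.sub_mul] at this
    exact this
  have h1 : mlObjective T 1 = T.trace := by simp [mlObjective]
  set B : ℝ := (T.trace - n * (1 + Real.log (c/2))) / (c/2) with hB
  set C : Set (Matrix (Fin n) (Fin n) ℝ) :=
    {K | K.PosSemidef} ∩ {K | ∀ i j, i ≠ j → ¬ G.Adj i j → K i j = 0} ∩
      {K | K.trace ≤ B} ∩ {K | Real.exp (-T.trace) ≤ K.det} with hC
  have hmem : ∀ K ∈ graphModel n G, mlObjective T K ≤ T.trace → K ∈ C := by
    rintro K ⟨hK, hz⟩ hle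
    have a1 := htr K hK.posSemidef
    have a2 := aux_logdet hK (half_pos hc)
    have a3 := hK.posSemidef.trace_nonneg
    unfold mlObjective at hle
    refine ⟨⟨⟨hK.posSemidef, hz⟩, ?_⟩, ?_⟩
    · change K.trace ≤ B
      rw [hB, le_div_iff₀ (half_pos hc)]
      linarith
    · change Real.exp (-T.trace) ≤ K.det
      rw [← Real.le_log_iff_exp_le hK.det_pos]
      have := mul_nonneg hc.le a3
      linarith
  have hone : (1 : Matrix (Fin n) (Fin n) ℝ) ∈ graphModel n G :=
    ⟨Matrix.PosDef.one, fun i j hij _ => Matrix.one_apply_ne hij⟩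
  have hCc : IsCompact C := by
    have hbox : IsCompact (Set.univ.pi fun _ : Fin n => Set.univ.pi fun _ : Fin n =>
        Set.Icc (-B) B) :=
      isCompact_univ_pi fun _ => isCompact_univ_pi fun _ => isCompact_Icc
    have hcl : IsClosed C := by
      refine (((aux_closed n).inter ?_).inter ?_).inter ?_
      · simp only [Set.ofPred_forall]
        refine isClosed_iInter fun i => isClosed_iInter fun j => isClosed_iInter fun _ =>
          isClosed_iInter fun _ => isClosed_eq (by fun_prop) continuous_const
      · exact isClosed_le (by fun_prop) continuous_const
      · exact isClosed_le continuous_const (by fun_prop)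
    refine hbox.of_isClosed_subset hcl ?_
    rintro K ⟨⟨⟨hK, -⟩, hb⟩, -⟩ i - j -
    exact abs_le.1 ((aux_entry hK i j).trans hb)
  have hpos : ∀ K ∈ C, 0 < K.det := fun K hK => (Real.exp_pos _).trans_le hK.2
  have hcont : ContinuousOn (mlObjective T) C := by
    unfold mlObjective
    refine ContinuousOn.sub (by fun_prop) (ContinuousOn.log (by fun_prop) fun K hK => (hpos K hK).ne')
  obtain ⟨K, hK, hmin⟩ := hCc.exists_isMinOn ⟨1, hmem 1 hone h1.le⟩ hcont
  refine ⟨K, ⟨(hK.1.1.1.posDef_iff_det_ne_zero).2 (hpos K hK).ne', hK.1.1.2⟩, fun K' hK' => ?_⟩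
  by_cases hle : mlObjective T K' ≤ T.trace
  · exact hmin (hmem K' hK' hle)
  · have : mlObjective T K ≤ mlObjective T 1 := hmin (hmem 1 hone h1.le)
    linarith

lemma aux_deriv {n : ℕ} {S K E : Matrix (Fin n) (Fin n) ℝ} (hK : K.PosDef) :
    HasDerivAt (fun t : ℝ => mlObjective S (K + t • E)) ((S * E).trace - (K⁻¹ * E).trace) 0 := by
  have hu : IsUnit K.det := hK.det_pos.ne'.isUnit
  have hf : ∀ t : ℝ, K + t • E = K * (1 + t • (K⁻¹ * E)) := by
    intro t
    rw [Matrix.mul_add, Matrix.mul_smul, ← Matrix.mul_assoc, Matrix.mul_nonsing_inv _ hu]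
    simp
  have hdet : HasDerivAt (fun t : ℝ => (K + t • E).det) (K.det * (K⁻¹ * E).trace) 0 := by
    obtain ⟨p, hp'⟩ : ∃ p : Polynomial ℝ, ∀ t : ℝ, (K + t • E).det =
        K.det * (1 + (K⁻¹ * E).trace * t + p.eval t * t ^ 2) :=
      ⟨_, fun t => by rw [hf, Matrix.det_mul, Matrix.det_one_add_smul]⟩
    rw [funext hp']
    have hp := p.hasDerivAt (0:ℝ)
    have := (((hasDerivAt_const (0:ℝ) (1:ℝ)).add ((hasDerivAt_id (0:ℝ)).const_mul (K⁻¹ * E).trace)).add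
      (hp.mul ((hasDerivAt_id (0:ℝ)).pow 2))).const_mul K.det
    refine HasDerivAt.congr_deriv this ?_
    simp
  have hlog := hdet.log (by simpa using hK.det_pos.ne')
  have htr : HasDerivAt (fun t : ℝ => (S * (K + t • E)).trace) ((S * E).trace) 0 := by
    simp only [Matrix.mul_add, Matrix.mul_smul, Matrix.trace_add, Matrix.trace_smul, smul_eq_mul]
    simpa using ((hasDerivAt_id (0:ℝ)).mul_const (S * E).trace).const_add (S * K).trace
  have := htr.sub hlog
  refine HasDerivAt.congr_deriv this ?_
  simp [mul_div_cancel_left₀ _ hK.det_pos.ne']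

lemma aux_iff {n : ℕ} (G : SimpleGraph (Fin n)) {S : Matrix (Fin n) (Fin n) ℝ} (hS : Sᵀ = S) :
    (∃ K ∈ graphModel n G, ∀ K' ∈ graphModel n G, mlObjective S K ≤ mlObjective S K') ↔
    ∃ T : Matrix (Fin n) (Fin n) ℝ, T.PosDef ∧ (∀ i, T i i = S i i) ∧
      (∀ i j, G.Adj i j → T i j = S i j) := by
  constructor
  · rintro ⟨K, ⟨hK, hz⟩, hmin⟩
    have key : ∀ i j, i = j ∨ G.Adj i j → K⁻¹ i j = S i j := by
      intro i j hij
      set E : Matrix (Fin n) (Fin n) ℝ := Matrix.single i j 1 + Matrix.single j i 1 with hE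
      have hEh : E.IsHermitian := by
        simp [Matrix.IsHermitian, hE, Matrix.conjTranspose_single, add_comm]
      have hEz : ∀ a b, a ≠ b → ¬ G.Adj a b → E a b = 0 := by
        intro a b hab hn
        have e1 : ¬ (i = a ∧ j = b) := by
          rintro ⟨rfl, rfl⟩
          tauto
        have e2 : ¬ (j = a ∧ i = b) := by
          rintro ⟨rfl, rfl⟩
          rcases hij with h | h
          · exact hab h.symm
          · exact hn h.symm
        simp [hE, Matrix.single_apply, e1, e2]
      have hloc : IsLocalMin (fun t : ℝ => mlObjective S (K + t • E)) 0 := by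
        filter_upwards [aux_open hK hEh] with t ht
        simpa using hmin (K + t • E) ⟨ht, fun a b hab hn => by simp [hz a b hab hn, hEz a b hab hn]⟩
      have h0 := hloc.hasDerivAt_eq_zero (aux_deriv hK)
      have s1 : S j i = S i j := congrFun (congrFun hS i) j
      have s2 : K⁻¹ j i = K⁻¹ i j := by simpa using hK.inv.1.apply i j
      simp [hE, Matrix.mul_add, Matrix.trace_mul_single, s1, s2] at h0
      linarith
    exact ⟨K⁻¹, hK.inv, fun i => key i i (Or.inl rfl), fun i j h => key i j (Or.inr h)⟩
  · rintro ⟨T, hT, hd, he⟩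
    have hobj : ∀ K ∈ graphModel n G, mlObjective S K = mlObjective T K := by
      rintro K ⟨hK, hz⟩
      unfold mlObjective
      congr 1
      simp only [Matrix.trace, Matrix.diag, Matrix.mul_apply]
      refine Finset.sum_congr rfl fun i _ => Finset.sum_congr rfl fun j _ => ?_
      by_cases hij : i = j
      · subst hij
        rw [hd]
      · by_cases ha : G.Adj i j
        · rw [he i j ha]
        · rw [hz j i (Ne.symm hij) (fun h => ha h.symm)]
          simp
    obtain ⟨K, hK, hmin⟩ := aux_min G hT
    exact ⟨K, hK, fun K' hK' => by rw [hobj K hK, hobj K' hK']; exact hmin K' hK'⟩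

/-- Dempster's characterization: `MLT(G)` is the minimum positive integer `d` such that
for almost every real `n × d` matrix `X`, with `S = X Xᵀ`, there is a symmetric positive
definite matrix `T` agreeing with `S` on the diagonal and on the edges of `G`. -/
theorem mlt_eq_min_completion (n : ℕ) (G : SimpleGraph (Fin n)) :
    mlt n (graphModel n G) =
      sInf {d : ℕ | 0 < d ∧
        ∀ᵐ X : Fin n → Fin d → ℝ ∂volume,
          ∃ T : Matrix (Fin n) (Fin n) ℝ, T.PosDef ∧
            (∀ i, T i i = (Matrix.of X * (Matrix.of X)ᵀ) i i) ∧
            (∀ i j, G.Adj i j → T i j = (Matrix.of X * (Matrix.of X)ᵀ) i j)} := by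
  unfold mlt
  congr 1
  ext d
  refine and_congr_right fun _ => ?_
  refine Filter.eventually_congr (Filter.Eventually.of_forall fun X => ?_)
  exact aux_iff G (by simp [Matrix.transpose_mul])
end
end

section
/- (Buhl, lower bound) Let G be a simple graph on vertex set {1,…,n} with clique number ω (the largest size of a set of pairwise adjacent vertices). Then MLT(G) ≥ ω. -/
open MeasureTheory Matrix

noncomputable section

theorem aux_null_vec {n d : ℕ} (C : Finset (Fin n)) (hC : d < C.card)
    (X : Matrix (Fin n) (Fin d) ℝ) :
    ∃ v : Fin n → ℝ, v ≠ 0 ∧ Xᵀ *ᵥ v = 0 ∧ ∀ i, i ∉ C → v i = 0 := by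
  let L : (Fin n → ℝ) →ₗ[ℝ] (Fin d → ℝ) × ({i // i ∉ C} → ℝ) :=
    (Matrix.mulVecLin Xᵀ).prod (LinearMap.funLeft ℝ ℝ Subtype.val)
  have hk : LinearMap.ker L ≠ ⊥ := by
    apply LinearMap.ker_ne_bot_of_finrank_lt
    have h1 : C.card ≤ n := by simpa using Finset.card_le_univ C
    simp [Fintype.card_subtype_compl]
    omega
  obtain ⟨v, hv, hv0⟩ := (Submodule.ne_bot_iff _).mp hk
  have hL : L v = 0 := hv
  refine ⟨v, hv0, congrArg Prod.fst hL, fun i hi => ?_⟩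
  exact congrFun (congrArg Prod.snd hL) ⟨i, hi⟩

theorem aux_det_lt {n : ℕ} {K : Matrix (Fin n) (Fin n) ℝ} (hK : K.PosDef)
    {v : Fin n → ℝ} (hv : v ≠ 0) : K.det < (K + vecMulVec v v).det := by
  have hu : IsUnit K.det := (Matrix.isUnit_iff_isUnit_det _).mp hK.isUnit
  rw [vecMulVec_eq Unit, det_add_replicateCol_mul_replicateRow hu]
  have h2 : 0 < v ⬝ᵥ (K⁻¹ *ᵥ v) := by
    simpa using hK.inv.dotProduct_mulVec_pos hv
  have h3 : (1 + replicateRow Unit v * K⁻¹ * replicateCol Unit v).det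
      = 1 + v ⬝ᵥ (K⁻¹ *ᵥ v) := by
    rw [det_unique, Matrix.mul_assoc]
    simp [Matrix.mul_apply, dotProduct, mulVec]
  rw [h3]
  nlinarith [hK.det_pos]

theorem aux_lower {n d : ℕ} (G : SimpleGraph (Fin n)) (C : Finset (Fin n))
    (hcl : G.IsClique C) (hC : d < C.card)
    (X : Matrix (Fin n) (Fin d) ℝ) (K : Matrix (Fin n) (Fin n) ℝ) (hK : K ∈ graphModel n G) :
    ∃ K' ∈ graphModel n G, mlObjective (X * Xᵀ) K' < mlObjective (X * Xᵀ) K := by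
  obtain ⟨v, hv0, hXv, hvC⟩ := aux_null_vec C hC X
  have hd := aux_det_lt hK.1 hv0
  refine ⟨K + vecMulVec v v, ⟨hK.1.add_posSemidef ?_, ?_⟩, ?_⟩
  · simpa using posSemidef_vecMulVec_self_star v
  · intro i j hij hadj
    have h0 := hK.2 i j hij hadj
    by_cases hi : i ∈ C
    · by_cases hj : j ∈ C
      · exact absurd (hcl hi hj hij) hadj
      · simp [h0, vecMulVec_apply, hvC j hj]
    · simp [h0, vecMulVec_apply, hvC i hi]
  · have hz : X * Xᵀ * vecMulVec v v = 0 := by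
      rw [Matrix.mul_assoc, mul_vecMulVec, hXv]
      simp
    have hl := Real.log_lt_log hK.1.det_pos hd
    unfold mlObjective
    rw [Matrix.mul_add, hz, add_zero]
    linarith

theorem aux_entry_s3 {n : ℕ} {Q : Matrix (Fin n) (Fin n) ℝ} (hQ : Q.PosSemidef) (i j : Fin n) :
    |Q i j| ≤ Q.trace := by
  have hd : ∀ k, Q k k ≤ Q.trace := fun k =>
    Finset.single_le_sum (f := fun k => Q k k) (fun k _ => hQ.diag_nonneg) (Finset.mem_univ k)
  have hs : Q j i = Q i j := by simpa using hQ.1.apply i j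
  have key : ∀ s : ℝ, 0 ≤ Q i i + s * Q i j + s * Q j i + s * s * Q j j := by
    intro s
    have := hQ.dotProduct_mulVec_nonneg (Pi.single i 1 + Pi.single j s)
    simp [mulVec_add, add_dotProduct, dotProduct_add] at this
    linarith
  have h1 := key 1
  have h2 := key (-1)
  have := hd i
  have := hd j
  rw [abs_le]
  constructor <;> linarith

theorem aux_isClosed {n : ℕ} : IsClosed {K : Matrix (Fin n) (Fin n) ℝ | K.PosSemidef} := by
  have : {K : Matrix (Fin n) (Fin n) ℝ | K.PosSemidef} =
      {K | Kᵀ = K} ∩ ⋂ x : Fin n → ℝ, {K | 0 ≤ x ⬝ᵥ (K *ᵥ x)} := by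
    ext K
    simp [posSemidef_iff_dotProduct_mulVec, IsHermitian]
  rw [this]
  refine IsClosed.inter (isClosed_eq (by fun_prop) (by fun_prop)) (isClosed_iInter fun x => ?_)
  exact isClosed_le (by fun_prop) (by fun_prop)

theorem aux_trace_s3 {n : ℕ} (X : Matrix (Fin n) (Fin n) ℝ) (hX : X.det ≠ 0) :
    ∃ c : ℝ, 0 < c ∧ ∀ K : Matrix (Fin n) (Fin n) ℝ, K.PosSemidef →
      c * K.trace ≤ (X * Xᵀ * K).trace := by
  set P : Matrix (Fin n) (Fin n) ℝ := X⁻¹ * X⁻¹ᵀ with hP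
  set s : ℝ := ∑ i, ∑ j, |P i j| with hs
  have hs0 : 0 ≤ s := Finset.sum_nonneg fun i _ => Finset.sum_nonneg fun j _ => abs_nonneg _
  refine ⟨1 / (1 + s), by positivity, fun K hK => ?_⟩
  have hu : IsUnit X.det := isUnit_iff_ne_zero.mpr hX
  set Q : Matrix (Fin n) (Fin n) ℝ := Xᵀ * K * X with hQ
  have hQp : Q.PosSemidef := by simpa using hK.conjTranspose_mul_mul_same X
  have h1 : (X * Xᵀ * K).trace = Q.trace := by
    rw [hQ, Matrix.mul_assoc, Matrix.trace_mul_comm]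
  have hut : IsUnit Xᵀ.det := by rwa [det_transpose]
  have h2 : K.trace = (P * Q).trace := by
    have : P * Q = X⁻¹ * (K * X) := by
      rw [hP, hQ, transpose_nonsing_inv, Matrix.mul_assoc, Matrix.mul_assoc Xᵀ,
        Matrix.nonsing_inv_mul_cancel_left _ _ hut]
    rw [this, Matrix.trace_mul_comm, Matrix.mul_assoc, Matrix.mul_nonsing_inv _ hu, Matrix.mul_one]
  have h3 : (P * Q).trace ≤ s * Q.trace := by
    rw [hs, Finset.sum_mul, Matrix.trace]
    refine Finset.sum_le_sum fun i _ => ?_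
    rw [Matrix.diag_apply, Matrix.mul_apply, Finset.sum_mul]
    refine Finset.sum_le_sum fun j _ => ?_
    calc P i j * Q j i ≤ |P i j * Q j i| := le_abs_self _
      _ = |P i j| * |Q j i| := abs_mul _ _
      _ ≤ _ := mul_le_mul_of_nonneg_left (aux_entry_s3 hQp j i) (abs_nonneg _)
  have h4 := hQp.trace_nonneg
  rw [h1, h2, div_mul_eq_mul_div, one_mul, div_le_iff₀ (by positivity)]
  nlinarith

theorem aux_exists {n : ℕ} (G : SimpleGraph (Fin n)) (X : Matrix (Fin n) (Fin n) ℝ)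
    (hX : X.det ≠ 0) :
    ∃ K ∈ graphModel n G, ∀ K' ∈ graphModel n G,
      mlObjective (X * Xᵀ) K ≤ mlObjective (X * Xᵀ) K' := by
  obtain ⟨c, hc, htr⟩ := aux_trace_s3 X hX
  set S := X * Xᵀ with hS
  let g : Matrix (Fin n) (Fin n) ℝ → ℝ := fun K => K.det * Real.exp (-(S * K).trace)
  have hgc : Continuous g := by fun_prop
  have hg1 : 0 < g 1 := by simp only [g, det_one]; positivity
  have hlim : Filter.Tendsto
      (fun t : ℝ => (n.factorial : ℝ) * (1 / c) ^ n * ((c * t) ^ n * Real.exp (-(c * t))))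
      Filter.atTop (nhds 0) := by
    have := ((Real.tendsto_pow_mul_exp_neg_atTop_nhds_zero n).comp
      (Filter.tendsto_id.const_mul_atTop hc)).const_mul ((n.factorial : ℝ) * (1 / c) ^ n)
    simpa using this
  obtain ⟨R, hR⟩ := Filter.eventually_atTop.mp (hlim.eventually (gt_mem_nhds hg1))
  have hbd : ∀ K : Matrix (Fin n) (Fin n) ℝ, K.PosSemidef → R ≤ K.trace → g K < g 1 := by
    intro K hK hRK
    refine lt_of_le_of_lt ?_ (hR _ hRK)
    have hdet := Matrix.det_le (A := K) (abv := AbsoluteValue.abs) (x := K.trace)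
      (fun i j => aux_entry_s3 hK i j)
    have hdet' : K.det ≤ n.factorial * K.trace ^ n := by
      have := le_trans (le_abs_self K.det) hdet
      simpa using this
    have hexp : Real.exp (-(S * K).trace) ≤ Real.exp (-(c * K.trace)) :=
      Real.exp_le_exp.mpr (neg_le_neg (htr K hK))
    have ht := hK.trace_nonneg
    calc g K ≤ (n.factorial * K.trace ^ n) * Real.exp (-(c * K.trace)) :=
          mul_le_mul hdet' hexp (Real.exp_pos _).le (by positivity)
      _ = _ := by
          rw [mul_pow, one_div, inv_pow]
          field_simp
  let T : Set (Matrix (Fin n) (Fin n) ℝ) :=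
    {K | K.PosSemidef} ∩ ({K | K.trace ≤ max R n} ∩
      ⋂ i, ⋂ j, {K | i ≠ j → ¬ G.Adj i j → K i j = 0})
  have hTc : IsClosed T := by
    refine aux_isClosed.inter (IsClosed.inter (isClosed_le (by fun_prop) (by fun_prop)) ?_)
    refine isClosed_iInter fun i => isClosed_iInter fun j => ?_
    by_cases h : i ≠ j ∧ ¬ G.Adj i j
    · have : {K : Matrix (Fin n) (Fin n) ℝ | i ≠ j → ¬ G.Adj i j → K i j = 0}
          = {K | K i j = 0} := by
        ext K; simp [h.1, h.2]
      rw [this]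
      exact isClosed_eq (by fun_prop) (by fun_prop)
    · have : {K : Matrix (Fin n) (Fin n) ℝ | i ≠ j → ¬ G.Adj i j → K i j = 0}
          = Set.univ := by
        ext K
        simp only [Set.mem_setOf_eq, Set.mem_univ, iff_true]
        intro h1 h2
        exact absurd ⟨h1, h2⟩ h
      rw [this]
      exact isClosed_univ
  have hTk : IsCompact T := by
    have hbox : IsCompact (Set.univ.pi fun _ : Fin n => Set.univ.pi fun _ : Fin n =>
        Set.Icc (-(max R n)) (max R n)) :=
      isCompact_univ_pi fun _ => isCompact_univ_pi fun _ => isCompact_Icc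
    refine IsCompact.of_isClosed_subset hbox hTc fun K hK => ?_
    intro i _ j _
    exact abs_le.mp ((aux_entry_s3 hK.1 i j).trans hK.2.1)
  have h1T : (1 : Matrix (Fin n) (Fin n) ℝ) ∈ T := by
    refine ⟨PosSemidef.one, ?_, ?_⟩
    · simp
    · simp only [Set.mem_iInter, Set.mem_setOf_eq]
      intro i j hij _
      exact Matrix.one_apply_ne hij
  obtain ⟨K, hKT, hmax⟩ := hTk.exists_isMaxOn ⟨1, h1T⟩ hgc.continuousOn
  have hgK : g 1 ≤ g K := hmax h1T
  have hdK : 0 < K.det := by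
    by_contra hcon
    have : g K ≤ 0 := mul_nonpos_of_nonpos_of_nonneg (not_lt.mp hcon) (Real.exp_pos _).le
    linarith
  have hKP : K.PosDef := hKT.1.posDef_iff_det_ne_zero.mpr hdK.ne'
  have hKL : ∀ i j, i ≠ j → ¬ G.Adj i j → K i j = 0 := by
    have := hKT.2.2
    simpa only [Set.mem_iInter, Set.mem_setOf_eq] using this
  refine ⟨K, ⟨hKP, hKL⟩, fun K' hK' => ?_⟩
  have hle : g K' ≤ g K := by
    by_cases hR' : R ≤ K'.trace
    · exact ((hbd K' hK'.1.posSemidef hR').trans_le hgK).le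
    · refine hmax ⟨hK'.1.posSemidef, (not_le.mp hR').le.trans (le_max_left _ _), ?_⟩
      simpa only [Set.mem_iInter, Set.mem_setOf_eq] using hK'.2
  have hd' := hK'.1.det_pos
  have hpos : 0 < g K' := mul_pos hd' (Real.exp_pos _)
  have hlog := Real.log_le_log hpos hle
  simp only [g] at hlog
  rw [Real.log_mul hd'.ne' (Real.exp_pos _).ne', Real.log_mul hdK.ne' (Real.exp_pos _).ne',
    Real.log_exp, Real.log_exp] at hlog
  unfold mlObjective
  linarith

theorem aux_ae (n : ℕ) : ∀ᵐ X : Fin n → Fin n → ℝ ∂volume, (Matrix.of X).det ≠ 0 := by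
  let I : Fin n → Fin n → ℝ := fun i j => if i = j then 1 else 0
  have hcont : Continuous (fun p : (Fin n → Fin n → ℝ) × ℝ => (Matrix.of (p.1 + p.2 • I)).det) := by
    apply Continuous.matrix_det
    refine continuous_pi fun i => continuous_pi fun j => ?_
    simp only [Matrix.of_apply, Pi.add_apply, Pi.smul_apply]
    fun_prop
  have hm : MeasurableSet {p : (Fin n → Fin n → ℝ) × ℝ | (Matrix.of (p.1 + p.2 • I)).det ≠ 0} :=
    (isOpen_ne_fun hcont continuous_const).measurableSet
  have h1 : ∀ᵐ X : Fin n → Fin n → ℝ ∂volume, ∀ᵐ t : ℝ ∂volume,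
      (Matrix.of (X + t • I)).det ≠ 0 := by
    refine Filter.Eventually.of_forall fun X => ?_
    have hfin : {t : ℝ | (-(Matrix.of X)).charpoly.IsRoot t}.Finite :=
      Polynomial.finite_setOf_isRoot (Matrix.charpoly_monic _).ne_zero
    have := hfin.countable.ae_notMem (volume : Measure ℝ)
    filter_upwards [this] with t ht h0
    apply ht
    show Polynomial.eval t _ = 0
    rw [Matrix.eval_charpoly, ← h0]
    congr 1
    ext i j
    simp [I, Matrix.scalar_apply, Matrix.diagonal_apply]
    ring
  rw [Measure.ae_ae_comm hm] at h1
  obtain ⟨t, ht⟩ := h1.exists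
  have := (measurePreserving_sub_right volume (t • I)).quasiMeasurePreserving.ae ht
  filter_upwards [this] with X hX
  simpa using hX

/-- Buhl's lower bound: the clique number of `G` is at most `MLT(G)`. -/
theorem cliqueNum_le_mlt (n : ℕ) (G : SimpleGraph (Fin n)) :
    G.cliqueNum ≤ mlt n (graphModel n G) := by
  obtain ⟨C, hC⟩ := G.exists_isNClique_cliqueNum
  rcases Nat.eq_zero_or_pos n with rfl | hn
  · rw [← hC.card_eq, Finset.eq_empty_of_isEmpty C]
    simp
  unfold mlt
  refine le_csInf ⟨n, hn, ?_⟩ ?_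
  · filter_upwards [aux_ae n] with X hX
    exact aux_exists G (Matrix.of X) hX
  · rintro d ⟨_, hae⟩
    by_contra hlt
    obtain ⟨X, K, hK, hmin⟩ := hae.exists
    obtain ⟨K', hK', hlt'⟩ := aux_lower G C hC.isClique (by rw [hC.card_eq]; omega)
      (Matrix.of X) K hK
    exact absurd (hmin K' hK') (not_le.mpr hlt')
end
end

section
/- The maximum likelihood threshold of the four-cycle C_4 (the cycle graph on 4 vertices) equals 3. -/
open MeasureTheory Matrix

noncomputable section

lemma det_rankone {K : Matrix (Fin 4) (Fin 4) ℝ} (hK : K.PosDef) {a : ℝ} (ha : 0 < a)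
    {v : Fin 4 → ℝ} (hv : v ≠ 0) :
    (K + a • vecMulVec v v).PosDef ∧ K.det < (K + a • vecMulVec v v).det := by
  have hp : (vecMulVec v v).PosSemidef := by
    simpa using posSemidef_vecMulVec_self_star v
  refine ⟨hK.add_posSemidef (hp.smul ha.le), ?_⟩
  have hu : IsUnit K.det := (isUnit_iff_isUnit_det _).1 hK.isUnit
  have e : a • vecMulVec v v = replicateCol Unit (a • v) * replicateRow Unit v := by
    ext i j
    simp [vecMulVec_apply, Matrix.mul_apply, mul_assoc]
  rw [e, det_add_replicateCol_mul_replicateRow hu]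
  have h1 := hK.inv.dotProduct_mulVec_pos hv
  have h2 : (1 + replicateRow Unit v * K⁻¹ * replicateCol Unit (a • v)).det
      = 1 + a * (star v ⬝ᵥ (K⁻¹ *ᵥ v)) := by
    rw [det_unique, Matrix.mul_assoc]
    simp [Matrix.mul_apply, dotProduct, mulVec, Finset.mul_sum]
  rw [h2]
  nlinarith [hK.det_pos, mul_pos ha h1, mul_pos hK.det_pos (mul_pos ha h1)]

lemma trace_rankone {d : ℕ} (X : Matrix (Fin 4) (Fin d) ℝ) (v : Fin 4 → ℝ) (h : Xᵀ *ᵥ v = 0) :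
    ((X * Xᵀ) * vecMulVec v v).trace = 0 := by
  rw [mul_vecMulVec, ← mulVec_mulVec, h]
  simp

lemma no_min {d : ℕ} (X : Matrix (Fin 4) (Fin d) ℝ) {u w : Fin 4 → ℝ} {a b : ℝ}
    (ha : 0 < a) (hb : 0 < b) (hu : u ≠ 0) (hw : w ≠ 0) (hXu : Xᵀ *ᵥ u = 0) (hXw : Xᵀ *ᵥ w = 0)
    (G : SimpleGraph (Fin 4))
    (hG : ∀ i j, i ≠ j → ¬ G.Adj i j → a * (u i * u j) + b * (w i * w j) = 0) :
    ¬ ∃ K ∈ graphModel 4 G, ∀ K' ∈ graphModel 4 G,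
        mlObjective (X * Xᵀ) K ≤ mlObjective (X * Xᵀ) K' := by
  rintro ⟨K, ⟨hK, hK0⟩, hmin⟩
  obtain ⟨h1, h2⟩ := det_rankone hK ha hu
  obtain ⟨h3, h4⟩ := det_rankone h1 hb hw
  have := hmin _ ⟨h3, fun i j hij hA => by
    have := hG i j hij hA
    simp [vecMulVec_apply, hK0 i j hij hA]
    linarith⟩
  have h5 := Real.log_lt_log hK.det_pos (h2.trans h4)
  simp only [mlObjective, Matrix.mul_add, trace_add, trace_smul,
    trace_rankone X u hXu, trace_rankone X w hXw, Matrix.mul_smul] at this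
  simp at this
  linarith

lemma nonadj : ∀ i j : Fin 4, i ≠ j → ¬ (SimpleGraph.cycleGraph 4).Adj i j → 
    (i = 0 ∧ j = 2) ∨ (i = 2 ∧ j = 0) ∨ (i = 1 ∧ j = 3) ∨ (i = 3 ∧ j = 1) := by
  decide

lemma nonadj' : ∀ i : Fin 4, ¬ (SimpleGraph.cycleGraph 4).Adj i (i+2) := by
  decide

lemma not_ae {d : ℕ} {P : (Fin 4 → Fin d → ℝ) → Prop} {U : Set (Fin 4 → Fin d → ℝ)}
    (hU : IsOpen U) (hne : U.Nonempty) (h : ∀ X ∈ U, ¬ P X) : ¬ ∀ᵐ X ∂volume, P X := by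
  intro hP
  have := hU.measure_pos volume hne
  exact absurd (measure_mono_null (fun X hX => h X hX) (ae_iff.1 hP)) this.ne'

lemma fail_one : ¬ ∀ᵐ X : Fin 4 → Fin 1 → ℝ ∂volume,
      ∃ K ∈ graphModel 4 (SimpleGraph.cycleGraph 4), ∀ K' ∈ graphModel 4 (SimpleGraph.cycleGraph 4),
        mlObjective (Matrix.of X * (Matrix.of X)ᵀ) K ≤
          mlObjective (Matrix.of X * (Matrix.of X)ᵀ) K' := by
  refine not_ae (U := {X | X 0 0 ≠ 0}) (isOpen_ne_fun (by fun_prop) (by fun_prop))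
    ⟨fun _ _ => 1, by simp⟩ ?_
  intro X hX
  have hu : ![X 1 0, - X 0 0, 0, 0] ≠ 0 := by
    intro h
    have := congrFun h 1
    simp at this
    exact hX this
  have hk : (Matrix.of X)ᵀ *ᵥ ![X 1 0, - X 0 0, 0, 0] = 0 := by
    ext i
    fin_cases i
    simp [mulVec, dotProduct, Fin.sum_univ_four]
    ring
  refine no_min (Matrix.of X) one_pos one_pos hu hu hk hk _ ?_
  intro i j hij hA
  rcases nonadj i j hij hA with ⟨rfl, rfl⟩ | ⟨rfl, rfl⟩ | ⟨rfl, rfl⟩ | ⟨rfl, rfl⟩ <;> simp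

lemma fail_two : ¬ ∀ᵐ X : Fin 4 → Fin 2 → ℝ ∂volume,
      ∃ K ∈ graphModel 4 (SimpleGraph.cycleGraph 4), ∀ K' ∈ graphModel 4 (SimpleGraph.cycleGraph 4),
        mlObjective (Matrix.of X * (Matrix.of X)ᵀ) K ≤
          mlObjective (Matrix.of X * (Matrix.of X)ᵀ) K' := by
  let p (i j : Fin 4) (X : Fin 4 → Fin 2 → ℝ) : ℝ := X i 0 * X j 1 - X i 1 * X j 0
  have hp : ∀ i j, Continuous (p i j) := fun i j => by fun_prop
  refine not_ae (U := {X | 0 < p 3 0 X * p 0 1 X} ∩ {X | 0 < -(p 2 3 X * p 1 2 X)})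
    (IsOpen.inter (isOpen_lt continuous_const ((hp _ _).mul (hp _ _)))
      (isOpen_lt continuous_const ((hp _ _).mul (hp _ _)).neg))
    ⟨![![1, 0], ![1, 1], ![1, 2], ![0, -1]], by simp [p]⟩ ?_
  rintro X ⟨hb, ha⟩
  have hb : 0 < p 3 0 X * p 0 1 X := hb
  have ha : 0 < -(p 2 3 X * p 1 2 X) := ha
  have hu : ![p 1 3 X, p 3 0 X, 0, p 0 1 X] ≠ 0 := by
    intro h
    have := congrFun h 1
    simp at this
    simp [this] at hb
  have hw : ![0, p 2 3 X, p 3 1 X, p 1 2 X] ≠ 0 := by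
    intro h
    have := congrFun h 1
    simp at this
    simp [this] at ha
  refine no_min (Matrix.of X) ha hb hu hw ?_ ?_ _ ?_
  · ext i
    fin_cases i <;> simp [mulVec, dotProduct, Fin.sum_univ_four, p] <;> ring
  · ext i
    fin_cases i <;> simp [mulVec, dotProduct, Fin.sum_univ_four, p] <;> ring
  intro i j hij hA
  rcases nonadj i j hij hA with ⟨rfl, rfl⟩ | ⟨rfl, rfl⟩ | ⟨rfl, rfl⟩ | ⟨rfl, rfl⟩ <;> simp <;> ring

lemma generic (e : Fin 3 → Fin 4) (he : Function.Injective e) :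
    ∀ᵐ X : Fin 4 → Fin 3 → ℝ ∂volume, ((Matrix.of X).submatrix e id).det ≠ 0 := by
  let D : Set (Fin 4 → Fin 3 → ℝ) := {X | ((Matrix.of X).submatrix e id).det = 0}
  let A : Fin 4 → Fin 3 → ℝ := fun i j => if i = e j then 1 else 0
  have hD : MeasurableSet D := by
    refine (isClosed_eq ?_ continuous_const).measurableSet
    refine Continuous.matrix_det ?_
    refine continuous_matrix fun i j => ?_
    simp only [submatrix_apply, of_apply]
    fun_prop
  let T : Set (ℝ × (Fin 4 → Fin 3 → ℝ)) := {q | q.2 + q.1 • A ∈ D}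
  have hT : MeasurableSet T := by
    have : Measurable (fun q : ℝ × (Fin 4 → Fin 3 → ℝ) => q.2 + q.1 • A) := by
      apply Continuous.measurable; fun_prop
    exact this hD
  have h0 : (volume.prod volume : Measure ((Fin 4 → Fin 3 → ℝ) × ℝ)) (Prod.swap ⁻¹' T) = 0 := by
    refine Measure.measure_prod_null_of_ae_null (measurable_swap hT) ?_
    refine Filter.Eventually.of_forall fun X => ?_
    refine Set.Finite.measure_zero ?_ _
    have hf := (-((Matrix.of X).submatrix e id)).charpoly.roots.toFinset.finite_toSet
    refine hf.subset fun t ht => ?_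
    have ht : ((Matrix.of (X + t • A)).submatrix e id).det = 0 := ht
    simp only [Finset.mem_coe, Multiset.mem_toFinset]
    rw [Polynomial.mem_roots (charpoly_monic _).ne_zero, Polynomial.IsRoot, eval_charpoly, ← ht]
    congr 1
    ext i j
    by_cases hij : i = j
    · subst hij; simp [A]; ring
    · simp [A, hij, he.eq_iff]
  have h1 : (volume.prod volume : Measure (ℝ × (Fin 4 → Fin 3 → ℝ))) T = 0 := by
    rw [← Measure.prod_swap, Measure.map_apply measurable_swap hT]; exact h0
  have h2 := Measure.measure_ae_null_of_prod_null h1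
  obtain ⟨t, ht⟩ := h2.exists
  have h3 : volume ((fun X => X + t • A) ⁻¹' D) = 0 := ht
  rw [measure_preimage_add_right] at h3
  rw [ae_iff]
  simpa [D] using h3

/-- PSD closure of the model. -/
def psdModel : Set (Matrix (Fin 4) (Fin 4) ℝ) :=
  {K | K.PosSemidef ∧ ∀ i j, i ≠ j → ¬ (SimpleGraph.cycleGraph 4).Adj i j → K i j = 0}

lemma isClosed_psdModel : IsClosed psdModel := by
  have : psdModel = {K | Kᴴ = K} ∩ (⋂ x : Fin 4 → ℝ, {K | 0 ≤ star x ⬝ᵥ (K *ᵥ x)}) ∩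
      (⋂ i : Fin 4, ⋂ j : Fin 4, {K | i ≠ j → ¬ (SimpleGraph.cycleGraph 4).Adj i j → K i j = 0}) := by
    ext K
    simp [psdModel, posSemidef_iff_dotProduct_mulVec, IsHermitian]
  rw [this]
  refine ((isClosed_eq (by fun_prop) (by fun_prop)).inter
    (isClosed_iInter fun x => isClosed_le continuous_const ?_)).inter
    (isClosed_iInter fun i => isClosed_iInter fun j => ?_)
  · exact Continuous.dotProduct continuous_const (Continuous.matrix_mulVec continuous_id continuous_const)
  · by_cases h : i ≠ j ∧ ¬ (SimpleGraph.cycleGraph 4).Adj i j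
    · simp only [h.1, h.2, ne_eq, not_false_eq_true, forall_const]
      exact isClosed_eq (continuous_id.matrix_elem i j) continuous_const
    · convert isClosed_univ
      ext K
      simp only [Set.mem_univ, iff_true]
      intro h1 h2
      exact absurd ⟨h1, h2⟩ h

lemma entry_bound {K : Matrix (Fin 4) (Fin 4) ℝ} (hK : K.PosSemidef) (i j : Fin 4) :
    |K i j| ≤ K.trace := by
  have hd : ∀ i, 0 ≤ K i i := fun i => hK.diag_nonneg
  have hi : ∀ i, K i i ≤ K.trace := fun i =>
    Finset.single_le_sum (f := fun i => K i i) (fun i _ => hd i) (Finset.mem_univ i)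
  have hs : K j i = K i j := by simpa using hK.1.apply i j
  have h1 := hK.dotProduct_mulVec_nonneg (Pi.single i 1 + Pi.single j 1)
  have h2 := hK.dotProduct_mulVec_nonneg (Pi.single i 1 - Pi.single j 1)
  simp [mulVec_add, mulVec_sub, add_dotProduct, sub_dotProduct, hs] at h1 h2
  have := hi i
  have := hi j
  rw [abs_le]
  constructor <;> linarith

lemma isCompact_slice (T : ℝ) : IsCompact (psdModel ∩ {K | K.trace ≤ T}) := by
  have hc : IsCompact (Set.univ.pi fun _ : Fin 4 => Set.univ.pi fun _ : Fin 4 => Set.Icc (-T) T) :=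
    isCompact_univ_pi fun _ => isCompact_univ_pi fun _ => isCompact_Icc
  refine hc.of_isClosed_subset
    (isClosed_psdModel.inter (isClosed_le (by fun_prop) continuous_const)) ?_
  rintro K ⟨hK, hT⟩ i _ j _
  have := entry_bound hK.1 i j
  exact abs_le.1 (this.trans hT)

lemma det_le {K : Matrix (Fin 4) (Fin 4) ℝ} (hK : K.PosSemidef) : K.det ≤ K.trace ^ 4 := by
  have h1 : K.det = ∏ i, hK.1.eigenvalues i := by simpa using hK.1.det_eq_prod_eigenvalues
  have h2 : K.trace = ∑ i, hK.1.eigenvalues i := by simpa using hK.1.trace_eq_sum_eigenvalues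
  rw [h1, h2]
  calc ∏ i, hK.1.eigenvalues i ≤ ∏ _i : Fin 4, ∑ j, hK.1.eigenvalues j :=
        Finset.prod_le_prod (fun i _ => hK.eigenvalues_nonneg i) fun i _ =>
          Finset.single_le_sum (fun i _ => hK.eigenvalues_nonneg i) (Finset.mem_univ i)
    _ = _ := by simp

lemma trace_conj (X : Matrix (Fin 4) (Fin 3) ℝ) (K : Matrix (Fin 4) (Fin 4) ℝ) :
    (X * Xᵀ * K).trace = (Xᴴ * K * X).trace := by
  rw [Matrix.mul_assoc, trace_mul_comm, conjTranspose_eq_transpose_of_trivial]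

lemma trace_nn (X : Matrix (Fin 4) (Fin 3) ℝ) {K : Matrix (Fin 4) (Fin 4) ℝ} (hK : K.PosSemidef) :
    0 ≤ (X * Xᵀ * K).trace := by
  rw [trace_conj]
  exact (hK.conjTranspose_mul_mul_same X).trace_nonneg

lemma ne2 : ∀ i : Fin 4, i ≠ i + 2 := by decide

lemma trace_zero (X : Matrix (Fin 4) (Fin 3) ℝ)
    (hX : ∀ p : Fin 4, (X.submatrix p.succAbove id).det ≠ 0)
    {K : Matrix (Fin 4) (Fin 4) ℝ} (hK : K ∈ psdModel) (h0 : (X * Xᵀ * K).trace = 0) :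
    K.trace = 0 := by
  rw [trace_conj] at h0
  have h1 := (hK.1.conjTranspose_mul_mul_same X).trace_eq_zero_iff.1 h0
  have h2 : ∀ j, K *ᵥ (fun i => X i j) = 0 := by
    intro j
    refine (hK.1.dotProduct_mulVec_zero_iff _).1 ?_
    have := congrFun (congrFun h1 j) j
    rw [Matrix.mul_assoc] at this
    simpa [Matrix.mul_apply, dotProduct, mulVec] using this
  refine Finset.sum_eq_zero fun i _ => ?_
  have h3 : K i (i + 2) = 0 := hK.2 i (i+2) (ne2 i) (nonadj' i)
  have h4 : (fun k => K i ((i+2).succAbove k)) ᵥ* (X.submatrix (i+2).succAbove id) = 0 := by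
    ext j
    have := congrFun (h2 j) i
    simp only [mulVec, dotProduct, Fin.sum_univ_succAbove _ (i+2), h3] at this
    simpa [vecMul, dotProduct] using this
  have h5 := eq_zero_of_vecMul_eq_zero (hX (i+2)) h4
  obtain ⟨k, hk⟩ := Fin.exists_succAbove_eq (x := i) (y := i + 2) (ne2 i)
  have := congrFun h5 k
  simpa [hk] using this

lemma coercive (X : Matrix (Fin 4) (Fin 3) ℝ)
    (hX : ∀ p : Fin 4, (X.submatrix p.succAbove id).det ≠ 0) :
    ∃ c : ℝ, 0 < c ∧ ∀ K ∈ psdModel, c * K.trace ≤ (X * Xᵀ * K).trace := by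
  have hc : IsCompact ((psdModel ∩ {K | K.trace ≤ 1}) ∩ {K | K.trace = 1}) :=
    (isCompact_slice 1).inter_right (isClosed_eq (by fun_prop) continuous_const)
  have hsm : ∀ K ∈ psdModel, ∀ t : ℝ, 0 ≤ t → t • K ∈ psdModel := fun K hK t ht =>
    ⟨hK.1.smul ht, fun i j h1 h2 => by simp [hK.2 i j h1 h2]⟩
  have h1 : (1 : Matrix (Fin 4) (Fin 4) ℝ) ∈ psdModel :=
    ⟨.one, fun i j h1 _ => by simp [h1]⟩
  have hne : ((psdModel ∩ {K | K.trace ≤ 1}) ∩ {K | K.trace = 1}).Nonempty := by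
    refine ⟨(1/4 : ℝ) • 1, ⟨hsm _ h1 _ (by norm_num), ?_⟩, ?_⟩ <;> simp
  obtain ⟨K0, ⟨⟨hK0, -⟩, ht0⟩, hmin⟩ := hc.exists_isMinOn hne
    (f := fun K => (X * Xᵀ * K).trace) (Continuous.continuousOn (by fun_prop))
  have ht0 : K0.trace = 1 := ht0
  refine ⟨(X * Xᵀ * K0).trace, lt_of_le_of_ne (trace_nn X hK0.1) fun h => ?_, fun K hK => ?_⟩
  · have := trace_zero X hX hK0 h.symm
    linarith
  · rcases hK.1.trace_nonneg.eq_or_lt with h | h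
    · rw [← h, mul_zero]
      exact trace_nn X hK.1
    · have ht : (K.trace⁻¹ • K).trace = 1 := by simp [h.ne']
      have := hmin (a := K.trace⁻¹ • K) ⟨⟨hsm _ hK _ (inv_nonneg.2 h.le), ht.le⟩, ht⟩
      simp only [Set.mem_ofPred_eq, Matrix.mul_smul, trace_smul, smul_eq_mul] at this
      rw [← le_div_iff₀ h, div_eq_inv_mul]
      exact this

lemma exists_min (X : Matrix (Fin 4) (Fin 3) ℝ)
    (hX : ∀ p : Fin 4, (X.submatrix p.succAbove id).det ≠ 0) :
    ∃ K ∈ graphModel 4 (SimpleGraph.cycleGraph 4), ∀ K' ∈ graphModel 4 (SimpleGraph.cycleGraph 4),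
        mlObjective (X * Xᵀ) K ≤ mlObjective (X * Xᵀ) K' := by
  obtain ⟨c, hc, hco⟩ := coercive X hX
  have h1m : (1 : Matrix (Fin 4) (Fin 4) ℝ) ∈ graphModel 4 (SimpleGraph.cycleGraph 4) :=
    ⟨.one, fun i j h1 _ => by simp [h1]⟩
  set B := mlObjective (X * Xᵀ) 1 with hB
  set T := 2 / c * (B - 4 - 4 * Real.log (c / 8)) with hT
  let C := (psdModel ∩ {K | K.trace ≤ T}) ∩ {K | Real.exp (-B) ≤ K.det}
  have hC : IsCompact C :=
    (isCompact_slice T).inter_right (isClosed_le continuous_const (by fun_prop))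
  have key : ∀ K ∈ graphModel 4 (SimpleGraph.cycleGraph 4), mlObjective (X * Xᵀ) K ≤ B → K ∈ C := by
    intro K hK hle
    have hp : K ∈ psdModel := ⟨hK.1.posSemidef, hK.2⟩
    have htr : 0 < K.trace := hK.1.trace_pos
    have hd := hK.1.det_pos
    have a1 := hco K hp
    have a2 := trace_nn X hp.1
    simp only [mlObjective] at hle
    refine ⟨⟨hp, ?_⟩, ?_⟩
    · have a3 : Real.log K.det ≤ 4 * Real.log K.trace := by
        have := Real.log_le_log hd (det_le hp.1)
        rwa [Real.log_pow] at this
      have a4 := Real.log_le_sub_one_of_pos (mul_pos (div_pos hc (by norm_num : (0:ℝ) < 8)) htr)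
      rw [Real.log_mul (by positivity) htr.ne'] at a4
      have a5 : c / 2 * K.trace ≤ B - 4 - 4 * Real.log (c / 8) := by linarith
      show K.trace ≤ T
      rw [hT, div_mul_eq_mul_div, le_div_iff₀ hc]
      linarith
    · show Real.exp (-B) ≤ K.det
      rw [← Real.le_log_iff_exp_le hd]
      linarith
  have hcont : ContinuousOn (fun K => mlObjective (X * Xᵀ) K) C := by
    unfold mlObjective
    refine ContinuousOn.sub (Continuous.continuousOn (by fun_prop))
      (ContinuousOn.log (Continuous.continuousOn (by fun_prop)) fun K hK => ?_)
    exact ((Real.exp_pos _).trans_le hK.2).ne'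
  obtain ⟨K0, hK0, hmin⟩ := hC.exists_isMinOn ⟨1, key 1 h1m le_rfl⟩ hcont
  refine ⟨K0, ⟨hK0.1.1.1.posDef_iff_det_ne_zero.2 ((Real.exp_pos _).trans_le hK0.2).ne',
    hK0.1.1.2⟩, fun K' hK' => ?_⟩
  by_cases h : mlObjective (X * Xᵀ) K' ≤ B
  · exact hmin (key K' hK' h)
  · exact (hmin (key 1 h1m le_rfl)).trans (not_le.1 h).le

/-- The maximum likelihood threshold of the four-cycle equals `3`. -/
theorem mlt_cycleGraph_four : mlt 4 (graphModel 4 (SimpleGraph.cycleGraph 4)) = 3 := by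
  refine le_antisymm (Nat.sInf_le ⟨by norm_num, ?_⟩) (le_csInf ⟨3, by norm_num, ?_⟩ ?_)
  rotate_left 2
  · rintro d ⟨hd, h⟩
    by_contra! hlt
    interval_cases d
    · exact fail_one h
    · exact fail_two h
  all_goals
    have := MeasureTheory.ae_all_iff.2 fun p : Fin 4 => generic p.succAbove Fin.succAbove_right_injective
    filter_upwards [this] with X hX
    exact exists_min (Matrix.of X) hX
end
end

section
/- For every simple graph G on vertex set {1,…,n} and every positive integer d, there exists a subset N of the space of functions p : {1,…,n} → ℝ^d of Lebesgue measure zero such that either (G,p) is locally rigid for every p ∉ N, or (G,p) is not locally rigid for every p ∉ N. -/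
open MeasureTheory

noncomputable section

/-- Two `d`-dimensional frameworks `(G,p)` and `(G,q)` are equivalent if corresponding
edge lengths agree. -/
def FrameworkEquiv {n d : ℕ} (G : SimpleGraph (Fin n))
    (p q : Fin n → EuclideanSpace ℝ (Fin d)) : Prop :=
  ∀ i j, G.Adj i j → ‖q i - q j‖ = ‖p i - p j‖

/-- Two `d`-dimensional frameworks `(G,p)` and `(G,q)` are congruent if all pairwise
distances agree. -/
def FrameworkCongruent {n d : ℕ}
    (p q : Fin n → EuclideanSpace ℝ (Fin d)) : Prop :=
  ∀ i j, ‖q i - q j‖ = ‖p i - p j‖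

/-- A framework `(G,p)` is locally rigid if every sufficiently close framework that is
equivalent to it is congruent to it. -/
def LocallyRigid {n d : ℕ} (G : SimpleGraph (Fin n))
    (p : Fin n → EuclideanSpace ℝ (Fin d)) : Prop :=
  ∃ ε > (0 : ℝ), ∀ q : Fin n → EuclideanSpace ℝ (Fin d),
    (∀ i, ‖p i - q i‖ ≤ ε) → FrameworkEquiv G p q → FrameworkCongruent p q

open Topology Filter Module
open scoped Pointwise

theorem null_of_lines {X : Type*} [NormedAddCommGroup X] [NormedSpace ℝ X]
    [FiniteDimensional ℝ X] [MeasurableSpace X] [BorelSpace X] (μ : Measure X)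
    [μ.IsAddHaarMeasure] (D : X → ℝ) (hD : Continuous D) (p₀ : X) (h0 : D p₀ ≠ 0)
    (hP : ∀ p v, ∃ P : Polynomial ℝ, ∀ t : ℝ, P.eval t = D (p + t • v)) :
    μ {p | D p = 0} = 0 := by
  have hm : MeasurableSet {z : X × ℝ | D (p₀ + z.2 • z.1) = 0} :=
    (isClosed_eq (by fun_prop) continuous_const).measurableSet
  have h1 : (μ.prod volume) {z : X × ℝ | D (p₀ + z.2 • z.1) = 0} = 0 := by
    rw [Measure.measure_prod_null hm]
    refine Eventually.of_forall fun v => ?_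
    obtain ⟨P, hP⟩ := hP p₀ v
    have hP0 : P ≠ 0 := by
      rintro rfl
      have := hP 0
      simp at this
      exact h0 this.symm
    have : (Prod.mk v ⁻¹' {z : X × ℝ | D (p₀ + z.2 • z.1) = 0}) = {t | P.IsRoot t} := by
      ext t; simp [Polynomial.IsRoot, hP]
    change volume _ = 0
    rw [this]
    exact (Polynomial.finite_setOfPred_isRoot hP0).measure_zero _
  have hm' : MeasurableSet {z : ℝ × X | D (p₀ + z.1 • z.2) = 0} :=
    (isClosed_eq (by fun_prop) continuous_const).measurableSet
  have h2 : ((volume : Measure ℝ).prod μ) {z : ℝ × X | D (p₀ + z.1 • z.2) = 0} = 0 := by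
    rw [← Measure.prod_swap, Measure.map_apply measurable_swap hm']
    exact h1
  have h3 := Measure.measure_ae_null_of_prod_null h2
  have h4 : ∀ᵐ t : ℝ, t ≠ 0 := by simp [ae_iff]
  obtain ⟨t, ht, ht0⟩ := (h3.and h4).exists
  have e : {p | D p = 0} = (fun x => p₀ + x) '' (t • {x | D (p₀ + t • x) = 0}) := by
    ext x
    simp only [Set.mem_ofPred_eq, Set.mem_image, Set.mem_smul_set]
    constructor
    · intro hx
      exact ⟨x - p₀, ⟨t⁻¹ • (x - p₀), by simp [smul_smul, ht0, hx], by simp [smul_smul, ht0]⟩,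
        by simp⟩
    · rintro ⟨_, ⟨y, hy, rfl⟩, rfl⟩
      exact hy
  rw [e, Set.image_add_left, measure_preimage_add, Measure.addHaar_smul]
  have : μ {x | D (p₀ + t • x) = 0} = 0 := ht
  simp [this]

theorem exists_proj {X F : Type*} [NormedAddCommGroup X] [NormedSpace ℝ X]
    [FiniteDimensional ℝ X] [NormedAddCommGroup F] [NormedSpace ℝ F] [FiniteDimensional ℝ F]
    (L : X →ₗ[ℝ] (X →L[ℝ] F)) (p₀ : X) :
    ∃ (H : Submodule ℝ F) (π : F →L[ℝ] H) (D : X → ℝ), finrank ℝ H = finrank ℝ (L p₀).range ∧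
      Continuous D ∧ D p₀ ≠ 0 ∧
      (∀ p v, ∃ P : Polynomial ℝ, ∀ t : ℝ, P.eval t = D (p + t • v)) ∧
      ∀ p, D p ≠ 0 → (π ∘L L p).range = ⊤ := by
  let H : Submodule ℝ F := (L p₀).toLinearMap.range
  obtain ⟨π₀, hπ⟩ := H.subtype.exists_leftInverse_of_injective (by simp)
  obtain ⟨s, hs⟩ := ((L p₀).toLinearMap.rangeRestrict).exists_rightInverse_of_surjective
    (LinearMap.range_rangeRestrict _)
  let π : F →L[ℝ] H := π₀.toContinuousLinearMap
  let T : X →ₗ[ℝ] (H →ₗ[ℝ] H) :=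
    { toFun := fun p => π₀ ∘ₗ (L p).toLinearMap ∘ₗ s
      map_add' := fun p q => by ext x; simp
      map_smul' := fun c p => by ext x; simp }
  let b := finBasis ℝ H
  let M : X →ₗ[ℝ] Matrix (Fin (finrank ℝ H)) (Fin (finrank ℝ H)) ℝ :=
    (LinearMap.toMatrix b b).toLinearMap ∘ₗ T
  have hM : ∀ p, (M p).det = LinearMap.det (T p) := fun p => LinearMap.det_toMatrix b _
  have hT0 : T p₀ = LinearMap.id := by
    ext x
    have h1 : (L p₀) (s x) = x := congrArg Subtype.val (LinearMap.congr_fun hs x)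
    have h2 : π₀ (x : F) = x := LinearMap.congr_fun hπ x
    simp [T, h1, h2]
  refine ⟨H, π, fun p => (M p).det, rfl, ?_, ?_, ?_, ?_⟩
  · exact Continuous.matrix_det M.continuous_of_finiteDimensional
  · simp [hM, hT0]
  · intro p v
    refine ⟨Matrix.det (Matrix.of fun i j =>
      Polynomial.C (M p i j) + Polynomial.X * Polynomial.C (M v i j)), fun t => ?_⟩
    rw [← Polynomial.coe_evalRingHom, RingHom.map_det]
    congr 1
    ext i j
    simp
    exact mul_comm _ _
  · intro p hp
    have hu : IsUnit (LinearMap.det (T p)) := by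
      rw [← hM]; exact isUnit_iff_ne_zero.2 hp
    have hsurj : Function.Surjective (T p) :=
      (LinearMap.equivOfDetNeZero (T p) hu.ne_zero).surjective
    refine LinearMap.range_eq_top.2 fun y => ?_
    obtain ⟨x, hx⟩ := hsurj y
    exact ⟨s x, hx⟩

theorem const_on_fiber {X H F : Type*} [NormedAddCommGroup X] [NormedSpace ℝ X]
    [FiniteDimensional ℝ X] [NormedAddCommGroup H] [NormedSpace ℝ H] [FiniteDimensional ℝ H]
    [NormedAddCommGroup F] [NormedSpace ℝ F]
    (h : X → H) (h' : X → X →L[ℝ] H) (hc : ContDiff ℝ 1 h) (hh : ∀ p, HasFDerivAt h (h' p) p)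
    (g : X → F) (g' : X → X →L[ℝ] F) (hg : ∀ p, HasFDerivAt g (g' p) p)
    (p₀ : X) (hs : (h' p₀).range = ⊤) (hk : ∀ᶠ p in 𝓝 p₀, (h' p).ker ≤ (g' p).ker) :
    ∀ᶠ q in 𝓝 p₀, h q = h p₀ → g q = g p₀ := by
  have : CompleteSpace X := FiniteDimensional.complete ℝ X
  have : CompleteSpace H := FiniteDimensional.complete ℝ H
  have hstr : HasStrictFDerivAt h (h' p₀) p₀ :=
    hc.contDiffAt.hasStrictFDerivAt' (hh p₀) (by simp)
  let φ := HasStrictFDerivAt.implicitFunctionDataOfComplemented h (h' p₀) hstr hs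
    (h' p₀).ker_closedComplemented_of_finiteDimensional_range
  let e := φ.toOpenPartialHomeomorph
  have hsrc : p₀ ∈ e.source := φ.pt_mem_toOpenPartialHomeomorph_source
  have htgt : e p₀ ∈ e.target := e.map_source hsrc
  have hsymm : ContDiffAt ℝ 1 e.symm (e p₀) := by
    refine e.contDiffAt_symm htgt (f₀' := φ.leftDeriv.equivProdOfSurjectiveOfIsCompl φ.rightDeriv
      φ.range_leftDeriv φ.range_rightDeriv φ.isCompl_ker) ?_ ?_
    · rw [e.left_inv hsrc]
      exact φ.hasStrictFDerivAt.hasFDerivAt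
    · rw [e.left_inv hsrc]
      have : ContDiffAt ℝ 1 φ.prodFun p₀ := by
        refine ContDiffAt.prodMk hc.contDiffAt ?_
        exact (ContinuousLinearMap.contDiff _).contDiffAt.comp p₀
          (contDiffAt_id.sub contDiffAt_const)
      exact this
  have efst : ∀ x, (e x).1 = h x := fun x => rfl
  have h1 : ∀ᶠ y in 𝓝 (e p₀), ContDiffAt ℝ 1 e.symm y := hsymm.eventually (by simp)
  have h2 : ∀ᶠ y in 𝓝 (e p₀), y ∈ e.target := e.open_target.mem_nhds htgt
  have h3 : ∀ᶠ y in 𝓝 (e p₀), (h' (e.symm y)).ker ≤ (g' (e.symm y)).ker :=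
    (e.tendsto_symm hsrc).eventually hk
  obtain ⟨ε, hε, hb⟩ := Metric.eventually_nhds_iff_ball.1 (h1.and (h2.and h3))
  have hpair : ∀ z ∈ Metric.ball (e p₀).2 ε, (h p₀, z) ∈ Metric.ball (e p₀) ε := by
    intro z hz
    rw [Metric.mem_ball, Prod.dist_eq]
    simpa [efst, hε] using hz
  have hγ : ∀ z ∈ Metric.ball (e p₀).2 ε,
      HasFDerivAt (fun z => g (e.symm (h p₀, z))) (0 : (h' p₀).ker →L[ℝ] F) z := by
    intro z hz
    obtain ⟨c1, c2, c3⟩ := hb _ (hpair z hz)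
    have d1 : HasFDerivAt (fun z : (h' p₀).ker => e.symm (h p₀, z)) _ z :=
      (c1.differentiableAt (by simp)).hasFDerivAt.comp z (hasFDerivAt_prodMk_right (h p₀) z)
    have d2 := (hh (e.symm (h p₀, z))).comp z d1
    have d3 := (hg (e.symm (h p₀, z))).comp z d1
    have hev : (h ∘ fun z : (h' p₀).ker => e.symm (h p₀, z)) =ᶠ[𝓝 z] fun _ => h p₀ := by
      filter_upwards [Metric.isOpen_ball.mem_nhds hz] with w hw
      have := congrArg Prod.fst (e.right_inv (hb _ (hpair w hw)).2.1)
      rwa [efst] at this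
    have d4 := (d2.congr_of_eventuallyEq hev.symm).unique (hasFDerivAt_const (h p₀) z)
    have d5 : g' (e.symm (h p₀, z)) ∘L (fderiv ℝ e.symm (h p₀, z) ∘L
        ContinuousLinearMap.inr ℝ H (h' p₀).ker) = 0 := by
      ext v
      have : (fderiv ℝ e.symm (h p₀, z)) ((ContinuousLinearMap.inr ℝ H _) v) ∈
          (h' (e.symm (h p₀, z))).ker := by
        have := DFunLike.congr_fun d4 v
        simpa using this
      have := c3 this
      simpa using this
    rw [d5] at d3
    exact d3
  have hsnd : ∀ᶠ q in 𝓝 p₀, (e q).2 ∈ Metric.ball (e p₀).2 ε :=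
    ((e.continuousAt hsrc).snd).eventually (Metric.ball_mem_nhds _ hε)
  filter_upwards [hsnd, e.open_source.mem_nhds hsrc] with q hq hqs hqe
  have key := (convex_ball (e p₀).2 ε).is_const_of_fderivWithin_eq_zero (𝕜 := ℝ)
    (f := fun z => g (e.symm (h p₀, z)))
    (fun z hz => (hγ z hz).differentiableAt.differentiableWithinAt)
    (fun z hz => ((hγ z hz).hasFDerivWithinAt).fderivWithin
      (Metric.isOpen_ball.uniqueDiffWithinAt hz)) hq (Metric.mem_ball_self hε)
  have r1 : (h p₀, (e q).2) = e q := Prod.ext (by rw [efst, hqe]) rfl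
  have r2 : (h p₀, (e p₀).2) = e p₀ := Prod.ext (by rw [efst]) rfl
  simp only [r1, r2] at key
  rwa [e.left_inv hqs, e.left_inv hsrc] at key

theorem ker_le_of_const {X H F : Type*} [NormedAddCommGroup X] [NormedSpace ℝ X]
    [FiniteDimensional ℝ X] [NormedAddCommGroup H] [NormedSpace ℝ H] [FiniteDimensional ℝ H]
    [NormedAddCommGroup F] [NormedSpace ℝ F]
    (h : X → H) (h' : X →L[ℝ] H) (p₀ : X) (hh : HasStrictFDerivAt h h' p₀)
    (g : X → F) (g' : X →L[ℝ] F) (hg : HasFDerivAt g g' p₀)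
    (hs : h'.range = ⊤) (hc : ∀ᶠ q in 𝓝 p₀, h q = h p₀ → g q = g p₀) :
    h'.ker ≤ g'.ker := by
  have : CompleteSpace X := FiniteDimensional.complete ℝ X
  have d1 := (hh.to_implicitFunction hs).hasFDerivAt
  have e0 := hh.implicitFunction_apply_image hs
  have d2 : HasFDerivAt (fun z => g (hh.implicitFunction h h' hs (h p₀) z))
      (g' ∘L h'.ker.subtypeL) 0 := by
    refine HasFDerivAt.comp 0 ?_ d1
    rw [e0]; exact hg
  have t1 : Tendsto (hh.implicitFunction h h' hs (h p₀)) (𝓝 0) (𝓝 p₀) := by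
    have := d1.continuousAt.tendsto
    rwa [e0] at this
  have t2 : Tendsto (fun z : h'.ker => (h p₀, z)) (𝓝 0) (𝓝 (h p₀, 0)) :=
    (Continuous.prodMk_right (h p₀)).tendsto 0
  have hev : (fun z => g (hh.implicitFunction h h' hs (h p₀) z)) =ᶠ[𝓝 0] fun _ => g p₀ := by
    filter_upwards [t1.eventually hc, t2.eventually (hh.map_implicitFunction_eq hs)] with z a b
    exact a b
  have d4 := (d2.congr_of_eventuallyEq hev.symm).unique (hasFDerivAt_const (g p₀) 0)
  intro v hv
  have := DFunLike.congr_fun d4 ⟨v, hv⟩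
  simpa using this

theorem rank_facts {X F : Type*} [NormedAddCommGroup X] [NormedSpace ℝ X]
    [FiniteDimensional ℝ X] [NormedAddCommGroup F] [NormedSpace ℝ F] [FiniteDimensional ℝ F]
    [MeasurableSpace X] [BorelSpace X] (μ : Measure X) [μ.IsAddHaarMeasure]
    (L : X →ₗ[ℝ] (X →L[ℝ] F)) :
    ∃ (r : ℕ) (N : Set X), μ N = 0 ∧ IsClosed N ∧ (∀ p ∉ N, finrank ℝ (L p).range = r) ∧
      ∀ p, finrank ℝ (L p).range ≤ r := by
  have hb : BddAbove (Set.range fun p => finrank ℝ (L p).range) :=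
    ⟨finrank ℝ F, by rintro _ ⟨p, rfl⟩; exact Submodule.finrank_le _⟩
  obtain ⟨p₀, hp₀⟩ := Nat.sSup_mem (Set.range_nonempty fun p => finrank ℝ (L p).range) hb
  have hmax : ∀ p, finrank ℝ (L p).range ≤ finrank ℝ (L p₀).range := fun p => by
    have := le_csSup hb (Set.mem_range_self p)
    rw [← hp₀] at this
    exact this
  obtain ⟨H, π, D, hH, hD, hD0, hP, hs⟩ := exists_proj L p₀
  refine ⟨finrank ℝ (L p₀).range, {p | D p = 0}, null_of_lines μ D hD p₀ hD0 hP,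
    isClosed_eq hD continuous_const, fun p hp => le_antisymm (hmax p) ?_, hmax⟩
  have h1 : finrank ℝ (π ∘L L p).range = finrank ℝ H := by
    rw [hs p hp, finrank_top]
  rw [← hH, ← h1]
  have : (π ∘L L p).range = (L p).range.map π.toLinearMap := LinearMap.range_comp _ _
  rw [this]
  exact Submodule.finrank_map_le _ _

theorem exists_submersion {X F : Type*} [NormedAddCommGroup X] [NormedSpace ℝ X]
    [FiniteDimensional ℝ X] [NormedAddCommGroup F] [NormedSpace ℝ F] [FiniteDimensional ℝ F]
    (L : X →ₗ[ℝ] (X →L[ℝ] F)) (p₀ : X)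
    (hmax : ∀ p, finrank ℝ (L p).range ≤ finrank ℝ (L p₀).range) :
    ∃ (H : Submodule ℝ F) (π : F →L[ℝ] H), (π ∘L L p₀).range = ⊤ ∧
      ∀ᶠ p in 𝓝 p₀, (π ∘L L p).ker = (L p).ker := by
  obtain ⟨H, π, D, hH, hD, hD0, hP, hs⟩ := exists_proj L p₀
  refine ⟨H, π, hs p₀ hD0, ?_⟩
  filter_upwards [hD.continuousAt.eventually_ne hD0] with p hp
  symm
  apply Submodule.eq_of_le_of_finrank_le
  · intro v hv
    have hv : L p v = 0 := hv
    simp [hv]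
  · have h1 : finrank ℝ (π ∘L L p).range = finrank ℝ H := by
      rw [hs p hp, finrank_top]
    have h2 := (π ∘L L p).toLinearMap.finrank_range_add_finrank_ker
    have h3 := (L p).toLinearMap.finrank_range_add_finrank_ker
    have := hmax p
    omega

theorem abstract_dichotomy {X F : Type*} [NormedAddCommGroup X] [NormedSpace ℝ X]
    [FiniteDimensional ℝ X] [NormedAddCommGroup F] [NormedSpace ℝ F] [FiniteDimensional ℝ F]
    [MeasurableSpace X] [BorelSpace X] (μ : Measure X) [μ.IsAddHaarMeasure]
    (f k : X → F) (hf : ContDiff ℝ 1 f)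
    (L M : X →ₗ[ℝ] (X →L[ℝ] F)) (hL : ∀ p, HasFDerivAt f (L p) p)
    (hM : ∀ p, HasFDerivAt k (M p) p) (hker : ∀ p, (M p).ker ≤ (L p).ker) :
    ∃ N : Set X, μ N = 0 ∧
      ((∀ p ∉ N, ∀ᶠ q in 𝓝 p, f q = f p → k q = k p) ∨
       (∀ p ∉ N, ¬ ∀ᶠ q in 𝓝 p, f q = f p → k q = k p)) := by
  obtain ⟨r, N, hN, hNc, hr, hrmax⟩ := rank_facts μ L
  obtain ⟨r', N', hN', hNc', hr', hrmax'⟩ := rank_facts μ M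
  refine ⟨N ∪ N', measure_union_null hN hN', ?_⟩
  have hmax : ∀ p ∉ N, ∀ q, finrank ℝ (L q).range ≤ finrank ℝ (L p).range := fun p hp q => by
    rw [hr p hp]; exact hrmax q
  by_cases hrr : r = r'
  · left
    intro p hp
    have hpN : p ∉ N := fun h => hp (Or.inl h)
    obtain ⟨H, π, hs, hk⟩ := exists_submersion L p (hmax p hpN)
    have := const_on_fiber (fun x => π (f x)) (fun x => π ∘L L x) (π.contDiff.comp hf)
      (fun x => π.hasFDerivAt.comp x (hL x)) k (fun x => M x) hM p hs (by
        filter_upwards [hk, (hNc.union hNc').isOpen_compl.mem_nhds hp] with q hq hq2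
        rw [hq]
        refine (Submodule.eq_of_le_of_finrank_le (hker q) ?_).ge
        have h2 := (L q).toLinearMap.finrank_range_add_finrank_ker
        have h3 := (M q).toLinearMap.finrank_range_add_finrank_ker
        have h4 := hr q fun h => hq2 (Or.inl h)
        have h5 := hr' q fun h => hq2 (Or.inr h)
        omega)
    filter_upwards [this] with q hq e
    exact hq (by rw [e])
  · right
    intro p hp hrig
    have hpN : p ∉ N := fun h => hp (Or.inl h)
    have hpN' : p ∉ N' := fun h => hp (Or.inr h)
    obtain ⟨H, π, hs, hk⟩ := exists_submersion L p (hmax p hpN)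
    have hc := const_on_fiber (fun x => π (f x)) (fun x => π ∘L L x) (π.contDiff.comp hf)
      (fun x => π.hasFDerivAt.comp x (hL x)) f (fun x => L x) hL p hs (by
        filter_upwards [hk] with q hq
        exact hq.le)
    have hle := ker_le_of_const (fun x => π (f x)) (π ∘L L p) p
      ((π.contDiff.comp hf).contDiffAt.hasStrictFDerivAt' (π.hasFDerivAt.comp p (hL p)) (by simp))
      k (M p) (hM p) hs (by
        filter_upwards [hc, hrig] with q h1 h2 h3
        exact h2 (h1 h3))
    rw [hk.self_of_nhds] at hle
    have he := le_antisymm hle (hker p)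
    have h2 := (L p).toLinearMap.finrank_range_add_finrank_ker
    have h3 := (M p).toLinearMap.finrank_range_add_finrank_ker
    have h4 := hr p hpN
    have h5 := hr' p hpN'
    rw [he] at h2
    omega

open Classical in
def edgeMap {n d : ℕ} (G : SimpleGraph (Fin n)) (p : Fin n → EuclideanSpace ℝ (Fin d)) :
    Fin n → Fin n → ℝ :=
  fun i j => if G.Adj i j then ‖p i - p j‖ ^ 2 else 0

open Classical in
def edgeDeriv {n d : ℕ} (G : SimpleGraph (Fin n)) :
    (Fin n → EuclideanSpace ℝ (Fin d)) →ₗ[ℝ]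
      ((Fin n → EuclideanSpace ℝ (Fin d)) →L[ℝ] (Fin n → Fin n → ℝ)) where
  toFun p := ContinuousLinearMap.pi fun i => ContinuousLinearMap.pi fun j =>
    if G.Adj i j then (2 : ℝ) • (innerSL ℝ (p i - p j)) ∘L
      (ContinuousLinearMap.proj (R := ℝ) (φ := fun _ : Fin n => EuclideanSpace ℝ (Fin d)) i -
        ContinuousLinearMap.proj (R := ℝ) (φ := fun _ : Fin n => EuclideanSpace ℝ (Fin d)) j)
      else 0
  map_add' p q := by
    refine ContinuousLinearMap.ext fun v => ?_
    ext i j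
    by_cases h : G.Adj i j
    · simp [h, inner_sub_left, inner_add_left]; ring
    · simp [h]
  map_smul' c p := by
    refine ContinuousLinearMap.ext fun v => ?_
    ext i j
    by_cases h : G.Adj i j
    · simp [h, inner_sub_left, inner_smul_left]; ring
    · simp [h]

theorem edgeMap_eq_iff {n d : ℕ} (G : SimpleGraph (Fin n))
    (p q : Fin n → EuclideanSpace ℝ (Fin d)) :
    edgeMap G q = edgeMap G p ↔ FrameworkEquiv G p q := by
  constructor
  · intro h i j hij
    have := congrFun (congrFun h i) j
    simp only [edgeMap, hij, if_true] at this
    exact (sq_eq_sq₀ (norm_nonneg _) (norm_nonneg _)).1 this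
  · intro h
    ext i j
    by_cases hij : G.Adj i j
    · simp [edgeMap, hij, h i j hij]
    · simp [edgeMap, hij]

theorem edgeMap_hasFDerivAt {n d : ℕ} (G : SimpleGraph (Fin n))
    (p : Fin n → EuclideanSpace ℝ (Fin d)) :
    HasFDerivAt (edgeMap G) (edgeDeriv G p) p := by
  refine hasFDerivAt_pi.2 fun i => hasFDerivAt_pi.2 fun j => ?_
  by_cases hij : G.Adj i j
  · simp only [edgeMap, hij, if_true]
    have := ((hasFDerivAt_apply (𝕜 := ℝ) i p).sub (hasFDerivAt_apply (𝕜 := ℝ) j p)).norm_sq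
    refine HasFDerivAt.congr_fderiv this ?_
    refine ContinuousLinearMap.ext fun v => ?_
    simp [edgeDeriv, hij]
    try ring
  · simp only [edgeMap, hij, if_false]
    exact hasFDerivAt_const _ _

theorem edgeMap_contDiff {n d : ℕ} (G : SimpleGraph (Fin n)) :
    ContDiff ℝ 1 (edgeMap (d := d) G) := by
  refine contDiff_pi.2 fun i => contDiff_pi.2 fun j => ?_
  by_cases hij : G.Adj i j
  · simp only [edgeMap, hij, if_true]
    exact ((contDiff_apply ℝ _ i).sub (contDiff_apply ℝ _ j)).norm_sq ℝ
  · simp only [edgeMap, hij, if_false]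
    exact contDiff_const

theorem congruent_iff {n d : ℕ} (p q : Fin n → EuclideanSpace ℝ (Fin d)) :
    FrameworkEquiv ⊤ p q ↔ FrameworkCongruent p q := by
  constructor
  · intro h i j
    by_cases hij : i = j
    · simp [hij]
    · exact h i j (by simpa using hij)
  · intro h i j _
    exact h i j

theorem locallyRigid_iff {n d : ℕ} (G : SimpleGraph (Fin n))
    (p : Fin n → EuclideanSpace ℝ (Fin d)) :
    LocallyRigid G p ↔ ∀ᶠ q in 𝓝 p, edgeMap G q = edgeMap G p → edgeMap ⊤ q = edgeMap ⊤ p := by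
  simp only [edgeMap_eq_iff, congruent_iff]
  rw [Metric.nhds_basis_closedBall.eventually_iff]
  unfold LocallyRigid
  refine exists_congr fun ε => and_congr_right fun hε => forall_congr' fun q => ?_
  rw [Metric.mem_closedBall, dist_comm, dist_pi_le_iff hε.le]
  simp only [dist_eq_norm]

/-- Generic dichotomy for local rigidity: outside a Lebesgue-null set of configurations,
either every framework on `G` is locally rigid, or none is. -/
theorem generic_local_rigidity_dichotomy (n d : ℕ) (hd : 0 < d)
    (G : SimpleGraph (Fin n)) :
    ∃ N : Set (Fin n → EuclideanSpace ℝ (Fin d)), volume N = 0 ∧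
      ((∀ p ∉ N, LocallyRigid G p) ∨ (∀ p ∉ N, ¬ LocallyRigid G p)) := by
  obtain ⟨N, hN, h⟩ := abstract_dichotomy (volume : Measure (Fin n → EuclideanSpace ℝ (Fin d)))
    (edgeMap G) (edgeMap ⊤) (edgeMap_contDiff G) (edgeDeriv G) (edgeDeriv ⊤)
    (edgeMap_hasFDerivAt G) (edgeMap_hasFDerivAt ⊤) (by
      intro p v hv
      have hv : edgeDeriv ⊤ p v = 0 := hv
      change edgeDeriv G p v = 0
      ext i j
      have h2 := congrFun (congrFun hv i) j
      by_cases hij : G.Adj i j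
      · simpa [edgeDeriv, hij, hij.ne] using h2
      · simp [edgeDeriv, hij])
  refine ⟨N, hN, ?_⟩
  simpa only [locallyRigid_iff] using h
end
end
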